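/- arXiv:2506.23904 — 5 statements merged into one kernel-verified Lean document; each statement's English description precedes it below -/
import Mathlib

section
/- Let F = Σ_{|α|=d−1} X_α Y^α be the full Perazzo form and A_F = R/Ann_R(F) the full Perazzo algebra. Let ℓ = Σ_{|α|=d−1} a_α x_α + Σ_{j=1}^m b_j y_j ∈ [A_F]_1 and suppose either (A) there exists k ∈ {1,…,m} with b_k ≠ 0, b_i = 0 for all i ≠ k, and a_{(d−1)e_k} = 0 (where (d−1)e_k denotes the multi-index with d−1 in position k and 0 elsewhere), or (B) a_α = 0 for all α and b_j ≠ 0 for some j. Then the Jordan type of ℓ in A_F is the partition of dim_K A_F in which, for each 1 ≤ k ≤ d, the part k occurs with multiplicity exactly 2·binom(m+d−2−k, m−2) and no part exceeds d; that is, P_{ℓ,A_F} = (d^2, (d−1)^{2·binom(m−1,m−2)}, (d−2)^{2·binom(m,m−2)}, …, 1^{2·binom(m+d−3,m−2)}). -/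
open MvPolynomial

/-- The differential operator `∏_i ∂^{s i}/∂X_i^{s i}` acting on `K[X_i : i ∈ σ]`
(any order of composition gives the same operator, since partial derivatives commute). -/
noncomputable def diffOp {K : Type*} [CommSemiring K] {σ : Type*} [DecidableEq σ]
    (s : σ →₀ ℕ) : Module.End K (MvPolynomial σ K) :=
  (s.support.toList.map fun i =>
    ((MvPolynomial.pderiv i).toLinearMap : Module.End K (MvPolynomial σ K)) ^ s i).prod

/-- The apolarity (differentiation) action `f ∘ F` of a polynomial `f` on a polynomial `F`:
each variable of `f` acts as partial differentiation with respect to the corresponding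
variable of `F`. -/
noncomputable def diffAction {K : Type*} [CommSemiring K] {σ : Type*} [DecidableEq σ]
    (f F : MvPolynomial σ K) : MvPolynomial σ K :=
  ∑ s ∈ f.support, f.coeff s • diffOp s F

/-- The apolar annihilator ideal `Ann(F) = {f : f ∘ F = 0}`.  (This set is already an
ideal, so taking the ideal span does not change it.) -/
noncomputable def annIdeal {K : Type*} [CommSemiring K] {σ : Type*} [DecidableEq σ]
    (F : MvPolynomial σ K) : Ideal (MvPolynomial σ K) :=
  Ideal.span {f | diffAction f F = 0}

/-- Multi-indices `α = (i_1, …, i_m) ∈ ℕ^m` with `i_1 + ⋯ + i_m = d - 1`,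
indexing the `x`-variables of a full Perazzo algebra. -/
abbrev MIdx (m d : ℕ) := {α : Fin m → ℕ // ∑ i, α i = d - 1}

instance (m d : ℕ) : Fintype (MIdx m d) :=
  Fintype.ofFinset (Finset.Nat.antidiagonalTuple m (d - 1))
    (fun _ => Finset.Nat.mem_antidiagonalTuple)

/-- The variable index set of a full Perazzo algebra:
`x_α` for `|α| = d - 1` together with `y_1, …, y_m`. -/
abbrev PIdx (m d : ℕ) := MIdx m d ⊕ Fin m

/-- The full Perazzo form `F = ∑_{|α| = d-1} X_α Y^α`. -/
noncomputable def perazzoForm (K : Type*) [CommSemiring K] (m d : ℕ) :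
    MvPolynomial (PIdx m d) K :=
  ∑ α : MIdx m d, X (Sum.inl α) * ∏ j, X (Sum.inr j) ^ (α.1 j)

/-- The linear form `ℓ = ∑_α a_α x_α + ∑_j b_j y_j`. -/
noncomputable def linForm {K : Type*} [CommSemiring K] {m d : ℕ}
    (a : MIdx m d → K) (b : Fin m → K) : MvPolynomial (PIdx m d) K :=
  ∑ α : MIdx m d, C (a α) * X (Sum.inl α) + ∑ j, C (b j) * X (Sum.inr j)

/-- The rank of the `k`-th power of the multiplication map `×ℓ : A → A`,
as a `K`-linear endomorphism. -/
noncomputable def rkPow {K A : Type*} [Field K] [CommRing A] [Algebra K A]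
    (ℓ : A) (k : ℕ) : ℕ :=
  Module.finrank K (LinearMap.range ((LinearMap.mulLeft K ℓ) ^ k))

/-- `ℓ` has Jordan type (in the `K`-algebra `A`) given by the multiplicity function
`mult : ℕ → ℕ`: for every `k ≥ 1`, the number of Jordan blocks of size `k` of the
multiplication map `×ℓ` is `rank(×ℓ^{k-1}) - 2·rank(×ℓ^k) + rank(×ℓ^{k+1})`
(written additively to avoid truncated subtraction). -/
def IsJordanTypeMult {K A : Type*} [Field K] [CommRing A] [Algebra K A]
    (ℓ : A) (mult : ℕ → ℕ) : Prop :=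
  ∀ k : ℕ, 1 ≤ k → rkPow (K := K) ℓ (k - 1) + rkPow (K := K) ℓ (k + 1)
      = mult k + 2 * rkPow (K := K) ℓ k

/-- The multi-index `(d-1)·e_k`, with `d - 1` in position `k` and `0` elsewhere. -/
def unitIdx (m d : ℕ) (k : Fin m) : MIdx m d :=
  ⟨fun i => if i = k then d - 1 else 0, by simp⟩


noncomputable section Perazzo
set_option linter.deprecated false

section gen
variable {K : Type*} [Field K] {σ : Type*} [DecidableEq σ]

theorem pz_comm : ∀ a ∈ Set.range (fun i : σ => ((pderiv i).toLinearMap : Module.End K (MvPolynomial σ K))),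
    ∀ b ∈ Set.range (fun i : σ => ((pderiv i).toLinearMap : Module.End K (MvPolynomial σ K))),
    a * b = b * a := by
  rintro _ ⟨i, rfl⟩ _ ⟨j, rfl⟩
  refine LinearMap.ext fun f => ?_
  refine MvPolynomial.induction_on' f (fun s u => ?_) (fun p q hp hq => by rw [map_add, map_add, hp, hq])
  change pderiv i (pderiv j (monomial s u)) = pderiv j (pderiv i (monomial s u))
  simp only [pderiv_monomial]
  by_cases h : i = j
  · subst h; rfl
  · have h' : j ≠ i := Ne.symm h
    rw [tsub_right_comm]
    simp only [Finsupp.coe_tsub, Pi.sub_apply, Finsupp.single_apply, h, h', if_false, tsub_zero]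
    congr 1; ring

/-- the commutative algebra generated by partial derivatives -/
abbrev pzAlg (K : Type*) [Field K] (σ : Type*) [DecidableEq σ] :
    Subalgebra K (Module.End K (MvPolynomial σ K)) :=
  Algebra.adjoin K (Set.range (fun i : σ => ((pderiv i).toLinearMap : Module.End K (MvPolynomial σ K))))

instance pzInst : CommRing (pzAlg K σ) := Algebra.adjoinCommRingOfComm K pz_comm

/-- the action as an algebra map -/
def pzPhi (K : Type*) [Field K] (σ : Type*) [DecidableEq σ] :
    MvPolynomial σ K →ₐ[K] Module.End K (MvPolynomial σ K) :=
  (pzAlg K σ).val.comp (aeval (R := K) (S₁ := pzAlg K σ)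
    (fun i : σ => (⟨_, Algebra.subset_adjoin ⟨i, rfl⟩⟩ : pzAlg K σ)))

theorem pzPhi_X (i : σ) (F : MvPolynomial σ K) : pzPhi K σ (X i) F = pderiv i F := by
  simp [pzPhi]

theorem pzPhi_X' (i : σ) : pzPhi K σ (X i) = (pderiv i).toLinearMap := by
  ext1; ext1; simp [pzPhi_X]

theorem pzPhi_comm (p q : MvPolynomial σ K) (F : MvPolynomial σ K) :
    pzPhi K σ p (pzPhi K σ q F) = pzPhi K σ q (pzPhi K σ p F) := by
  rw [← Module.End.mul_apply, ← Module.End.mul_apply, ← map_mul, ← map_mul, mul_comm]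

theorem pzPhi_mul (p q : MvPolynomial σ K) (F : MvPolynomial σ K) :
    pzPhi K σ (p * q) F = pzPhi K σ p (pzPhi K σ q F) := by
  rw [map_mul, Module.End.mul_apply]

theorem pzPhi_C (c : K) (F : MvPolynomial σ K) : pzPhi K σ (C c) F = c • F := by
  rw [← MvPolynomial.algebraMap_eq, AlgHom.commutes]; simp [Algebra.algebraMap_eq_smul_one]

theorem pz_diffOp (s : σ →₀ ℕ) : diffOp (K := K) s = pzPhi K σ (monomial s 1) := by
  have : (monomial s (1:K)) = (s.support.toList.map (fun i => (X i : MvPolynomial σ K) ^ s i)).prod := by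
    rw [Finset.prod_map_toList, monomial_eq]; simp [Finsupp.prod]
  rw [this, map_list_prod, List.map_map, diffOp]
  congr 2
  ext1 i
  simp [pzPhi_X']

theorem pz_diffAction (f F : MvPolynomial σ K) : diffAction f F = pzPhi K σ f F := by
  conv_rhs => rw [f.as_sum]
  rw [diffAction, map_sum, LinearMap.sum_apply]
  refine Finset.sum_congr rfl fun s _ => ?_
  rw [pz_diffOp, ← LinearMap.smul_apply, ← map_smul, smul_monomial, smul_eq_mul, mul_one]

theorem pz_mem_ann (f F : MvPolynomial σ K) : f ∈ annIdeal F ↔ pzPhi K σ f F = 0 := by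
  refine ⟨fun h => ?_, fun h => Ideal.subset_span (by simpa [pz_diffAction] using h)⟩
  refine Submodule.span_induction (p := fun f _ => pzPhi K σ f F = 0) ?_ ?_ ?_ ?_ h
  · intro x hx; simpa [pz_diffAction] using hx
  · simp
  · intro x y _ _ hx hy; simp [hx, hy]
  · intro a x _ hx; rw [smul_eq_mul, pzPhi_mul, hx, map_zero]

/-- the map whose range computes the rank -/
def pzMap (F L : MvPolynomial σ K) : MvPolynomial σ K →ₗ[K] MvPolynomial σ K :=
  (pzPhi K σ L).comp ((pzPhi K σ).toLinearMap.flip F)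

theorem pzMap_apply (F L f : MvPolynomial σ K) : pzMap F L f = pzPhi K σ L (pzPhi K σ f F) := rfl

theorem pz_rkPow (F L : MvPolynomial σ K) (k : ℕ) :
    rkPow (K := K) (Ideal.Quotient.mk (annIdeal F) L) k =
      Module.finrank K (LinearMap.range (pzMap F (L ^ k))) := by
  rw [rkPow, LinearMap.pow_mulLeft, ← map_pow]
  set Q : MvPolynomial σ K →ₗ[K] (MvPolynomial σ K ⧸ annIdeal F) :=
    (Ideal.Quotient.mkₐ K (annIdeal F)).toLinearMap with hQ
  set g := (LinearMap.mulLeft K (Ideal.Quotient.mk (annIdeal F) (L ^ k))).comp Q with hg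
  have h1 : LinearMap.range g = LinearMap.range
      (LinearMap.mulLeft K (Ideal.Quotient.mk (annIdeal F) (L ^ k))) := by
    apply LinearMap.range_comp_of_range_eq_top
    rw [LinearMap.range_eq_top]
    exact Ideal.Quotient.mk_surjective
  have h2 : LinearMap.ker g = LinearMap.ker (pzMap F (L ^ k)) := by
    ext f
    rw [LinearMap.mem_ker, LinearMap.mem_ker, pzMap_apply, ← pzPhi_mul, ← pz_mem_ann,
      ← Ideal.Quotient.eq_zero_iff_mem, map_mul]
    rfl
  rw [← h1]
  exact LinearEquiv.finrank_eq (g.quotKerEquivRange.symm.trans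
    ((Submodule.quotEquivOfEq _ _ h2).trans (pzMap F (L ^ k)).quotKerEquivRange))

end gen

section gen2
set_option linter.unusedSectionVars false
set_option linter.unusedSimpArgs false
variable {K : Type*} [Field K] {σ : Type*} [DecidableEq σ]

theorem pzPhi_monomial [CharZero K] (s t : σ →₀ ℕ) :
    ∃ c : K, pzPhi K σ (monomial s 1) (monomial t 1) = monomial (t - s) c ∧ (c ≠ 0 ↔ s ≤ t) := by
  have hadd : ∀ f g : σ →₀ ℕ,
      (∀ t : σ →₀ ℕ, ∃ c : K, pzPhi K σ (monomial f 1) (monomial t 1) = monomial (t - f) c ∧ (c ≠ 0 ↔ f ≤ t)) →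
      (∀ t : σ →₀ ℕ, ∃ c : K, pzPhi K σ (monomial g 1) (monomial t 1) = monomial (t - g) c ∧ (c ≠ 0 ↔ g ≤ t)) →
      (∀ t : σ →₀ ℕ, ∃ c : K, pzPhi K σ (monomial (f + g) 1) (monomial t 1) = monomial (t - (f + g)) c
        ∧ (c ≠ 0 ↔ f + g ≤ t)) := by
    intro f g hf hg t
    obtain ⟨c, hc, hc'⟩ := hg t
    obtain ⟨e, he, he'⟩ := hf (t - g)
    refine ⟨c * e, ?_, ?_⟩
    · have h1 : (monomial (f + g) (1:K)) = monomial f 1 * monomial g 1 := by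
        rw [monomial_mul, one_mul]
      have h2 : (monomial (t - g) c : MvPolynomial σ K) = c • monomial (t - g) 1 := by
        rw [smul_monomial, smul_eq_mul, mul_one]
      rw [h1, pzPhi_mul, hc, h2, map_smul, he, smul_monomial, smul_eq_mul, tsub_tsub, add_comm g f]
    · rw [mul_ne_zero_iff, hc', he']
      simp only [Finsupp.le_def, Finsupp.coe_tsub, Pi.sub_apply, Finsupp.coe_add, Pi.add_apply]
      constructor
      · rintro ⟨h1, h2⟩ i
        have := h1 i; have := h2 i; omega
      · intro h
        exact ⟨fun i => by have := h i; omega, fun i => by have := h i; omega⟩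
  have hzero : ∀ t : σ →₀ ℕ, ∃ c : K, pzPhi K σ (monomial 0 1) (monomial t 1) = monomial (t - 0) c
      ∧ (c ≠ 0 ↔ 0 ≤ t) := by
    intro t
    refine ⟨1, ?_, by simp⟩
    have : (monomial 0 (1:K) : MvPolynomial σ K) = 1 := rfl
    rw [this, map_one]; simp
  revert t
  induction s using Finsupp.induction_linear with
  | zero => exact hzero
  | add f g hf hg => exact hadd f g hf hg
  | single i n =>
    induction n with
    | zero => rw [Finsupp.single_zero]; exact hzero
    | succ n ih =>
      rw [Finsupp.single_add]
      refine hadd _ _ ih fun t => ⟨(t i : K), ?_, ?_⟩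
      · change pzPhi K σ (X i) _ = _
        rw [pzPhi_X, pderiv_monomial, one_mul]
      · rw [Nat.cast_ne_zero, Finsupp.single_le_iff]
        omega

/-- polynomials of degree `< n` -/
def pzG (K : Type*) [Field K] (σ : Type*) (n : ℕ) : Submodule K (MvPolynomial σ K) :=
  restrictSupport K {s | s.degree < n}

theorem pzG_mem {n : ℕ} {p : MvPolynomial σ K} : p ∈ pzG K σ n ↔ ∀ s ∈ p.support, s.degree < n := by
  rw [pzG, mem_restrictSupport_iff]; rfl

theorem pzG_zero {p : MvPolynomial σ K} (h : p ∈ pzG K σ 0) : p = 0 := by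
  rw [pzG_mem] at h
  rw [← support_eq_empty, Finset.eq_empty_iff_forall_notMem]
  intro s hs; exact absurd (h s hs) (by simp)

theorem pzG_mono {n k : ℕ} (h : n ≤ k) : pzG K σ n ≤ pzG K σ k := by
  intro p hp; rw [pzG_mem] at *; exact fun s hs => (hp s hs).trans_le h

theorem pzG_mul {n k : ℕ} {p q : MvPolynomial σ K} (hp : p ∈ pzG K σ (n+1)) (hq : q ∈ pzG K σ k) :
    p * q ∈ pzG K σ (n + k) := by
  rw [pzG_mem] at *
  intro s hs
  obtain ⟨u, hu, v, hv, rfl⟩ := Finset.mem_add.1 (support_mul p q hs)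
  have := hp u hu; have := hq v hv
  rw [map_add]; omega

theorem pzG_act [CharZero K] {r n : ℕ} {p g : MvPolynomial σ K} (hp : ∀ s ∈ p.support, r ≤ s.degree)
    (hg : g ∈ pzG K σ n) : pzPhi K σ p g ∈ pzG K σ (n - r) := by
  rw [pzG_mem] at hg
  rw [p.as_sum, map_sum, LinearMap.sum_apply]
  refine Submodule.sum_mem _ fun s hs => ?_
  rw [g.as_sum, map_sum]
  refine Submodule.sum_mem _ fun t ht => ?_
  obtain ⟨c, hc, hc'⟩ := pzPhi_monomial (K := K) s t
  rw [← mul_one (coeff s p), ← mul_one (coeff t g), ← smul_eq_mul, ← smul_eq_mul, ← smul_monomial,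
    ← smul_monomial, map_smul, map_smul, LinearMap.smul_apply, hc]
  refine Submodule.smul_mem _ _ (Submodule.smul_mem _ _ ?_)
  rw [pzG, monomial_mem_restrictSupport]
  by_cases h0 : c = 0
  · exact Or.inr h0
  · left
    have hst := hc'.1 h0
    have h1 := hp s hs
    have h2 := hg t ht
    have h3 : (t - s).degree + s.degree = t.degree := by
      rw [← map_add, tsub_add_cancel_of_le hst]
    show (t - s).degree < n - r
    omega

/-- linear form in y -/
def pzB {m : ℕ} (b : Fin m → K) : MvPolynomial (Fin m) K := ∑ j, C (b j) * X j

theorem pzB_order {m : ℕ} (b : Fin m → K) : ∀ s ∈ (pzB b).support, 1 ≤ s.degree := by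
  intro s hs
  by_contra h
  have h0 : s = 0 := by
    rw [← Finsupp.degree_eq_zero_iff]; omega
  subst h0
  rw [mem_support_iff] at hs
  apply hs
  simp [pzB, coeff_sum, coeff_zero_X]

theorem pzB_pow_act [CharZero K] {m : ℕ} (b : Fin m → K) (k : ℕ) {n : ℕ} {g : MvPolynomial (Fin m) K}
    (hg : g ∈ pzG K (Fin m) n) : pzPhi K _ (pzB b ^ k) g ∈ pzG K (Fin m) (n - k) := by
  induction k with
  | zero => simpa using hg
  | succ k ih =>
    rw [pow_succ', pzPhi_mul, ← Nat.sub_sub]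
    exact pzG_act (pzB_order b) ih

theorem pzB_leib {m : ℕ} (b : Fin m → K) (f g : MvPolynomial (Fin m) K) :
    pzPhi K _ (pzB b) (f * g) = f * pzPhi K _ (pzB b) g + g * pzPhi K _ (pzB b) f := by
  simp only [pzB, map_sum, LinearMap.sum_apply, pzPhi_mul, pzPhi_C, pzPhi_X, Finset.mul_sum,
    ← Finset.sum_add_distrib]
  refine Finset.sum_congr rfl fun j _ => ?_
  simp [smul_add]

theorem pzB_surj1 [CharZero K] {m : ℕ} (b : Fin m → K) (j0 : Fin m) (hj : b j0 ≠ 0) (n : ℕ) :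
    ∀ (i : ℕ) (h : MvPolynomial (Fin m) K), h ∈ pzG K (Fin m) n →
      ∃ g ∈ pzG K (Fin m) (n + i + 1), pzPhi K _ (pzB b) g = (C (b j0)⁻¹ * X j0) ^ i * h := by
  set s : MvPolynomial (Fin m) K := C (b j0)⁻¹ * X j0 with hs
  have hDs : pzPhi K _ (pzB b) s = 1 := by
    rw [hs]
    simp only [pzB, map_sum, LinearMap.sum_apply, pzPhi_mul, pzPhi_C, pzPhi_X, pderiv_C_mul, pderiv_X]
    rw [Finset.sum_eq_single j0]
    · simp [smul_eq_C_mul, ← C_mul, hj]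
    · intro j _ hne; simp [Pi.single_apply, hne, hne.symm]
    · simp
  have hDpow : ∀ i : ℕ, pzPhi K _ (pzB b) (s ^ (i+1)) = ((i:K)+1) • s ^ i := by
    intro i
    induction i with
    | zero => simp [hDs]
    | succ i ih =>
      rw [pow_succ, pzB_leib, hDs, ih]
      simp only [smul_eq_C_mul]
      push_cast
      simp only [map_add, map_one]
      ring
  have hsG : s ∈ pzG K (Fin m) (1+1) := by
    rw [hs, pzG_mem]
    intro t ht
    rw [C_mul_X_eq_monomial] at ht
    have := Finset.mem_singleton.1 (support_monomial_subset ht)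
    subst this; simp
  have hsGp : ∀ i : ℕ, s ^ i ∈ pzG K (Fin m) (i+1) := by
    intro i
    induction i with
    | zero =>
      rw [pow_zero, pzG_mem]
      intro t ht
      have : t = 0 := by simpa using Finset.mem_singleton.1 (support_monomial_subset (R := K) (a := 1) (s := 0) ht)
      subst this; simp
    | succ i ih => rw [pow_succ']; have := pzG_mul hsG ih; rwa [add_comm 1] at this
  induction n with
  | zero =>
    intro i h hh
    refine ⟨0, Submodule.zero_mem _, ?_⟩
    rw [pzG_zero hh]; simp
  | succ n ih =>
    intro i h hh
    have hDh : pzPhi K _ (pzB b) h ∈ pzG K (Fin m) n := by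
      have := pzG_act (pzB_order b) hh
      simpa using this
    obtain ⟨g', hg', hg''⟩ := ih (i+1) _ hDh
    have hi : ((i:K)+1) ≠ 0 := by exact_mod_cast Nat.succ_ne_zero i
    refine ⟨((i:K)+1)⁻¹ • (s ^ (i+1) * h - g'), ?_, ?_⟩
    · refine Submodule.smul_mem _ _ (Submodule.sub_mem _ ?_ ?_)
      · have := pzG_mul (hsGp (i+1)) hh
        exact pzG_mono (by omega) this
      · exact pzG_mono (by omega) hg'
    · rw [map_smul, map_sub, hg'', pzB_leib, hDpow, add_sub_cancel_left, mul_smul_comm, smul_smul,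
        inv_mul_cancel₀ hi, one_smul, mul_comm]

theorem pzB_surj [CharZero K] {m : ℕ} (b : Fin m → K) (j0 : Fin m) (hj : b j0 ≠ 0) (n k : ℕ)
    (h : MvPolynomial (Fin m) K) (hh : h ∈ pzG K (Fin m) (n - k)) :
      ∃ g ∈ pzG K (Fin m) n, pzPhi K _ (pzB b ^ k) g = h := by
  by_cases hk : n ≤ k
  · rw [Nat.sub_eq_zero_of_le hk] at hh
    exact ⟨0, Submodule.zero_mem _, by rw [pzG_zero hh, map_zero]⟩
  obtain ⟨e, rfl⟩ : ∃ e, n = e + k := ⟨n - k, by omega⟩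
  rw [Nat.add_sub_cancel] at hh
  clear hk
  induction k generalizing h with
  | zero => exact ⟨h, hh, by simp⟩
  | succ k ih =>
    obtain ⟨g, hg, rfl⟩ := ih h hh
    obtain ⟨g', hg', h'⟩ := pzB_surj1 b j0 hj _ 0 g hg
    refine ⟨g', hg', ?_⟩
    rw [pow_succ, pzPhi_mul, h']; simp

theorem pzG_finrank (m n : ℕ) (hm : 1 ≤ m) :
    Module.finrank K (pzG K (Fin m) n) = Nat.choose (m + n - 1) m := by
  have h1 : ((Finset.range n).biUnion (fun j => Finset.finsuppAntidiag (Finset.univ : Finset (Fin m)) j) : Set (Fin m →₀ ℕ))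
      = {s | s.degree < n} := by
    ext s
    simp [Finsupp.degree_eq_sum, Finset.mem_finsuppAntidiag]
  rw [pzG, ← h1, Module.finrank_eq_nat_card_basis (basisRestrictSupport K _), Nat.card_coe_set_eq, Set.ncard_coe_finset,
    Finset.card_biUnion]
  · simp only [Finset.card_finsuppAntidiag_nat_eq_choose, Finset.card_univ, Fintype.card_fin]
    induction n with
    | zero => simp; exact (Nat.choose_eq_zero_of_lt (by omega)).symm
    | succ n ih =>
      rw [Finset.sum_range_succ, ih]
      · obtain ⟨m, rfl⟩ : ∃ m', m = m' + 1 := ⟨m - 1, by omega⟩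
        rw [show m + 1 + n - 1 = m + n by omega, show m + 1 + (n + 1) - 1 = (m + n) + 1 by omega,
          Nat.choose_succ_succ, add_comm, Nat.choose_symm_add]
      · ext s
        simp [Finsupp.degree_eq_sum, Finset.mem_finsuppAntidiag]
  · intro i _ j _ hij
    rw [Function.onFun, Finset.disjoint_left]
    intro s hs hs'
    rw [Finset.mem_finsuppAntidiag] at hs hs'
    exact hij (hs.1.symm.trans hs'.1)

end gen2

section model
set_option linter.unusedSectionVars false
set_option linter.unusedSimpArgs false
variable {K : Type*} [Field K] [CharZero K] {m d : ℕ}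

/-- `Y^α` -/
def pzY (K : Type*) [Field K] {m d : ℕ} (α : MIdx m d) : MvPolynomial (Fin m) K :=
  ∏ j, X j ^ (α.1 j)

theorem pzY_eq (α : MIdx m d) : pzY K α = monomial (Finsupp.equivFunOnFinite.symm α.1) 1 := by
  rw [pzY, monomial_eq, Finsupp.prod_fintype _ _ (by simp)]; simp

/-- embedding of the y-polynomials -/
def pzI (K : Type*) [Field K] (m d : ℕ) : MvPolynomial (Fin m) K →ₐ[K] MvPolynomial (PIdx m d) K :=
  rename Sum.inr

theorem pzI_inj : Function.Injective (pzI K m d) := rename_injective _ Sum.inr_injective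

theorem pzI_inl (α : MIdx m d) (g : MvPolynomial (Fin m) K) :
    pderiv (Sum.inl α) (pzI K m d g) = 0 := by
  apply pderiv_eq_zero_of_notMem_vars
  intro h
  have := vars_rename _ _ h
  simp at this

theorem pzI_inr (j : Fin m) (g : MvPolynomial (Fin m) K) :
    pderiv (Sum.inr j) (pzI K m d g) = pzI K m d (pderiv j g) :=
  pderiv_rename Sum.inr_injective j g

/-- the model parametrization of `R ∘ F` -/
def pzE (K : Type*) [Field K] (m d : ℕ) :
    MvPolynomial (Fin m) K × MvPolynomial (Fin m) K →ₗ[K] MvPolynomial (PIdx m d) K :=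
  LinearMap.coprod
    (∑ α : MIdx m d, (LinearMap.mulLeft K (X (Sum.inl α))).comp
      ((pzI K m d).toLinearMap.comp ((pzPhi K (Fin m)).toLinearMap.flip (pzY K α))))
    (pzI K m d).toLinearMap

theorem pzE_apply (p g : MvPolynomial (Fin m) K) : pzE K m d (p, g) =
    ∑ α : MIdx m d, X (Sum.inl α) * pzI K m d (pzPhi K _ p (pzY K α)) + pzI K m d g := by
  simp [pzE, LinearMap.sum_apply]

theorem pzE_F : perazzoForm K m d = pzE K m d (1, 0) := by
  rw [pzE_apply, perazzoForm]
  simp [pzY, pzI]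

theorem pzE_x (α : MIdx m d) (p g : MvPolynomial (Fin m) K) :
    pzPhi K _ (X (Sum.inl α)) (pzE K m d (p, g)) = pzE K m d (0, pzPhi K _ p (pzY K α)) := by
  rw [pzPhi_X, pzE_apply, pzE_apply, map_add, pzI_inl, map_sum, Finset.sum_eq_single α]
  · simp [pzI_inl]
  · intro β _ h
    rw [pderiv_mul, pzI_inl, pderiv_X_of_ne (by simpa using h)]; simp
  · simp

theorem pzE_y (j : Fin m) (p g : MvPolynomial (Fin m) K) :
    pzPhi K _ (X (Sum.inr j)) (pzE K m d (p, g)) = pzE K m d (X j * p, pzPhi K _ (X j) g) := by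
  rw [pzPhi_X, pzE_apply, pzE_apply, map_add, pzI_inr, map_sum, pzPhi_X]
  congr 1
  refine Finset.sum_congr rfl fun α _ => ?_
  rw [pderiv_mul, pderiv_X_of_ne (by simp), pzI_inr, pzPhi_mul, pzPhi_X]; simp

theorem pzE_iota (q p g : MvPolynomial (Fin m) K) :
    pzPhi K _ (pzI K m d q) (pzE K m d (p, g)) = pzE K m d (q * p, pzPhi K _ q g) := by
  induction q using MvPolynomial.induction_on generalizing p g with
  | C c =>
    have : pzI K m d (C c) = C c := by simp [pzI]
    rw [this, pzPhi_C, pzPhi_C, ← map_smul, C_mul', Prod.smul_mk]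
  | add q r hq hr => rw [map_add, map_add, LinearMap.add_apply, hq, hr, ← map_add, add_mul,
      map_add (pzPhi K (Fin m))]; rfl
  | mul_X q j hq =>
    have : pzI K m d (X j) = X (Sum.inr j) := by simp [pzI]
    rw [map_mul, this, pzPhi_mul, pzE_y, hq, mul_assoc, pzPhi_mul]

theorem pzE_inj (p g : MvPolynomial (Fin m) K) (h : pzE K m d (p, g) = 0) :
    (∀ α : MIdx m d, pzPhi K _ p (pzY K α) = 0) ∧ g = 0 := by
  have h1 : ∀ α : MIdx m d, pzPhi K _ p (pzY K α) = 0 := by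
    intro α
    have := pzE_x α p g
    rw [h, map_zero, pzE_apply] at this
    apply pzI_inj (d := d)
    simpa using this.symm
  refine ⟨h1, ?_⟩
  rw [pzE_apply] at h
  apply pzI_inj (d := d)
  simpa [h1] using h

/-- `a` as a polynomial -/
def pzA (a : MIdx m d → K) : MvPolynomial (Fin m) K := ∑ α, a α • pzY K α

theorem pzE_L (a : MIdx m d → K) (b : Fin m → K) (p g : MvPolynomial (Fin m) K) :
    pzPhi K _ (linForm a b) (pzE K m d (p, g)) =
      pzE K m d (pzB b * p, pzPhi K _ p (pzA a) + pzPhi K _ (pzB b) g) := by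
  have h1 : ∑ j, C (b j) * X (Sum.inr j) = pzI K m d (pzB b) := by
    simp [pzB, pzI]
  rw [linForm, h1, map_add, LinearMap.add_apply, pzE_iota]
  have h2 : pzPhi K _ (∑ α : MIdx m d, C (a α) * X (Sum.inl α)) (pzE K m d (p, g))
      = pzE K m d (0, pzPhi K _ p (pzA a)) := by
    rw [map_sum, LinearMap.sum_apply, pzA, map_sum]
    have : ((0, ∑ α, pzPhi K _ p (a α • pzY K α)) : MvPolynomial (Fin m) K × MvPolynomial (Fin m) K)
      = ∑ α, a α • (0, pzPhi K _ p (pzY K α)) := by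
      ext1
      · simp [Prod.fst_sum]
      · simp [Prod.snd_sum]
    rw [this, map_sum]
    refine Finset.sum_congr rfl fun α _ => ?_
    rw [pzPhi_mul, pzE_x, pzPhi_C, map_smul]
  rw [h2, ← map_add]
  simp

theorem pzE_Lpow (a : MIdx m d → K) (b : Fin m → K) (k : ℕ) (p g : MvPolynomial (Fin m) K) :
    pzPhi K _ (linForm a b ^ k) (pzE K m d (p, g)) =
      pzE K m d (pzB b ^ k * p, (k : K) • pzPhi K _ (pzB b ^ (k - 1) * p) (pzA a)
        + pzPhi K _ (pzB b ^ k) g) := by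
  induction k with
  | zero => simp
  | succ k ih =>
    rw [pow_succ', pzPhi_mul, ih, pzE_L, ← mul_assoc, ← pow_succ', map_add, ← add_assoc,
      map_smul, ← pzPhi_mul, ← pzPhi_mul, ← mul_assoc, ← pow_succ' _ k, Nat.add_sub_cancel]
    congr 3
    cases k with
    | zero => simp
    | succ k =>
      rw [Nat.add_sub_cancel, ← pow_succ' _ k]; push_cast
      simp only [add_smul, one_smul]
      abel

theorem pzY_mem (hd : 1 ≤ d) (α : MIdx m d) : pzY K α ∈ pzG K (Fin m) d := by
  rw [pzY_eq, pzG, monomial_mem_restrictSupport]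
  left
  have := α.2
  show Finsupp.degree _ < d
  rw [Finsupp.degree_eq_sum]
  simp only [Finsupp.equivFunOnFinite_symm_apply_apply]
  omega

theorem pzA_mem (hd : 1 ≤ d) (a : MIdx m d → K) : pzA a ∈ pzG K (Fin m) d :=
  Submodule.sum_mem _ fun α _ => Submodule.smul_mem _ _ (pzY_mem hd α)

theorem pzG_act0 {n : ℕ} (p : MvPolynomial (Fin m) K) {g : MvPolynomial (Fin m) K}
    (hg : g ∈ pzG K (Fin m) n) : pzPhi K _ p g ∈ pzG K (Fin m) n :=
  pzG_act (r := 0) (by simp) hg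

theorem pz_V0_sub (hd : 1 ≤ d) (f : MvPolynomial (PIdx m d) K) :
    ∃ p g, g ∈ pzG K (Fin m) d ∧ pzPhi K _ f (perazzoForm K m d) = pzE K m d (p, g) := by
  induction f using MvPolynomial.induction_on with
  | C c => exact ⟨C c, 0, Submodule.zero_mem _, by
      rw [pzPhi_C, pzE_F, ← map_smul, Prod.smul_mk, smul_zero, ← C_mul', mul_one]⟩
  | add q r hq hr =>
    obtain ⟨p, g, hg, h⟩ := hq
    obtain ⟨p', g', hg', h'⟩ := hr
    refine ⟨p + p', g + g', Submodule.add_mem _ hg hg', ?_⟩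
    rw [map_add, LinearMap.add_apply, h, h', ← map_add]; rfl
  | mul_X q i hq =>
    obtain ⟨p, g, hg, h⟩ := hq
    rw [mul_comm, pzPhi_mul, h]
    rcases i with α | j
    · exact ⟨_, _, pzG_act0 _ (pzY_mem hd α), pzE_x α p g⟩
    · exact ⟨_, _, pzG_act0 _ hg, pzE_y j p g⟩

/-- complete a multi-index of degree `< d` to one of degree `d - 1` -/
theorem pz_complete (hm : 1 ≤ m) (s : Fin m →₀ ℕ) (hs : s.degree < d) :
    ∃ α : MIdx m d, s ≤ Finsupp.equivFunOnFinite.symm α.1 := by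
  set t := s + Finsupp.single (⟨0, hm⟩ : Fin m) (d - 1 - s.degree) with ht
  refine ⟨⟨t, ?_⟩, ?_⟩
  · rw [← Finsupp.degree_eq_sum, ht, map_add, Finsupp.degree_single]; omega
  · intro i; simp [ht]

theorem pz_gen (hm : 1 ≤ m) (g : MvPolynomial (Fin m) K) (hg : g ∈ pzG K (Fin m) d) :
    ∃ f, pzPhi K _ f (perazzoForm K m d) = pzE K m d (0, g) := by
  rw [pzG_mem] at hg
  have key : ∀ s ∈ g.support, ∃ f, pzPhi K _ f (perazzoForm K m d) =
      pzE K m d (0, monomial s (coeff s g)) := by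
    intro s hs
    obtain ⟨α, hα⟩ := pz_complete (d := d) hm s (hg s hs)
    obtain ⟨c, hc, hc'⟩ := pzPhi_monomial (K := K) (Finsupp.equivFunOnFinite.symm α.1 - s)
      (Finsupp.equivFunOnFinite.symm α.1)
    have hc0 : c ≠ 0 := hc'.2 tsub_le_self
    rw [← pzY_eq, tsub_tsub_cancel_of_le hα] at hc
    refine ⟨pzI K m d (C (coeff s g * c⁻¹) * monomial (Finsupp.equivFunOnFinite.symm α.1 - s) 1)
      * X (Sum.inl α), ?_⟩
    rw [pzPhi_mul, pzE_F, pzE_x, pzE_iota, map_one (pzPhi K (Fin m)), Module.End.one_apply, pzPhi_mul, hc, pzPhi_C,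
      smul_monomial, mul_zero, smul_eq_mul, mul_assoc, inv_mul_cancel₀ hc0, mul_one]
  choose! f hf using key
  refine ⟨∑ s ∈ g.support, f s, ?_⟩
  rw [map_sum, LinearMap.sum_apply, Finset.sum_congr rfl hf, ← map_sum]
  congr 1
  ext1
  · simp [Prod.fst_sum]
  · rw [Prod.snd_sum]; exact g.as_sum.symm

theorem pz_nondeg (hm : 1 ≤ m) (p : MvPolynomial (Fin m) K) 
    (h : ∀ α : MIdx m d, pzPhi K _ p (pzY K α) = 0) : ∀ s ∈ p.support, d ≤ s.degree := by
  intro s hs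
  by_contra hlt
  obtain ⟨α, hα⟩ := pz_complete (d := d) hm s (by omega)
  have h1 := congrArg (coeff (Finsupp.equivFunOnFinite.symm α.1 - s)) (h α)
  rw [pzY_eq, p.as_sum, map_sum, LinearMap.sum_apply, coeff_sum, coeff_zero,
    Finset.sum_eq_single s] at h1
  · obtain ⟨c, hc, hc'⟩ := pzPhi_monomial (K := K) s (Finsupp.equivFunOnFinite.symm α.1)
    rw [← mul_one (coeff s p), ← smul_eq_mul, ← smul_monomial, map_smul, LinearMap.smul_apply, hc,
      coeff_smul, coeff_monomial, if_pos rfl, smul_eq_mul] at h1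
    exact mul_ne_zero (mem_support_iff.1 hs) (hc'.2 hα) h1
  · intro t _ hts
    obtain ⟨c, hc, hc'⟩ := pzPhi_monomial (K := K) t (Finsupp.equivFunOnFinite.symm α.1)
    rw [← mul_one (coeff t p), ← smul_eq_mul, ← smul_monomial, map_smul, LinearMap.smul_apply, hc,
      coeff_smul, coeff_monomial]
    by_cases h0 : c = 0
    · simp [h0]
    rw [if_neg, smul_zero]
    intro heq
    apply hts
    have h2 := hc'.1 h0
    rw [← tsub_tsub_cancel_of_le h2, heq, tsub_tsub_cancel_of_le hα]
  · intro h'; exact absurd hs h'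

theorem pzB_ne (b : Fin m → K) (j0 : Fin m) (hj : b j0 ≠ 0) : pzB b ≠ 0 := by
  intro h
  have := congrArg (coeff (Finsupp.single j0 1)) h
  simp [pzB, coeff_sum, coeff_C_mul, coeff_X', Finsupp.single_left_inj] at this
  exact hj this

theorem pzB_G (b : Fin m → K) : pzB b ∈ pzG K (Fin m) (1+1) := by
  refine Submodule.sum_mem _ fun j _ => ?_
  rw [C_mul_X_eq_monomial, pzG, monomial_mem_restrictSupport]
  left; simp

theorem pzB_mulG (b : Fin m → K) (k : ℕ) {n : ℕ} {p : MvPolynomial (Fin m) K}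
    (hp : p ∈ pzG K (Fin m) n) : pzB b ^ k * p ∈ pzG K (Fin m) (n + k) := by
  induction k with
  | zero => simpa using hp
  | succ k ih =>
    rw [pow_succ', mul_assoc]
    exact pzG_mono (by omega) (pzG_mul (pzB_G b) ih)

theorem pz_split (n : ℕ) (p : MvPolynomial (Fin m) K) :
    ∃ p' p'' : MvPolynomial (Fin m) K, p = p' + p'' ∧ p' ∈ pzG K (Fin m) n ∧
      ∀ s ∈ p''.support, n ≤ s.degree := by
  refine ⟨∑ s ∈ p.support.filter (fun s => s.degree < n), monomial s (coeff s p),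
    ∑ s ∈ p.support.filter (fun s => ¬ s.degree < n), monomial s (coeff s p), ?_, ?_, ?_⟩
  · rw [Finset.sum_filter_add_sum_filter_not]; exact p.as_sum
  · refine Submodule.sum_mem _ fun s hs => ?_
    rw [pzG, monomial_mem_restrictSupport]
    exact Or.inl (Finset.mem_filter.1 hs).2
  · intro s hs
    obtain ⟨t, ht, hst⟩ := Finset.mem_biUnion.1 (support_sum hs)
    have := Finset.mem_singleton.1 (support_monomial_subset hst)
    subst this
    exact not_lt.1 (Finset.mem_filter.1 ht).2

/-- the reduced parametrization -/
def pzT (a : MIdx m d → K) (b : Fin m → K) (k : ℕ) :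
    MvPolynomial (Fin m) K × MvPolynomial (Fin m) K →ₗ[K]
      MvPolynomial (Fin m) K × MvPolynomial (Fin m) K :=
  LinearMap.prod ((LinearMap.mulLeft K (pzB b ^ k)).comp (LinearMap.fst K _ _))
    ((k : K) • (((pzPhi K (Fin m)).toLinearMap.flip (pzA a)).comp
      (LinearMap.mulLeft K (pzB b ^ (k-1)))).comp (LinearMap.fst K _ _) + LinearMap.snd K _ _)

theorem pzT_apply (a : MIdx m d → K) (b : Fin m → K) (k : ℕ) (p g : MvPolynomial (Fin m) K) :
    pzT a b k (p, g) = (pzB b ^ k * p, (k:K) • pzPhi K _ (pzB b ^ (k-1) * p) (pzA a) + g) := rfl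

theorem pz_rank (hm : 1 ≤ m) (hd : 1 ≤ d) (a : MIdx m d → K) (b : Fin m → K) (j0 : Fin m)
    (hj : b j0 ≠ 0) (hab : pzPhi K _ (pzB b ^ (d - 1)) (pzA a) = 0) (k : ℕ) :
    rkPow (K := K) (Ideal.Quotient.mk (annIdeal (perazzoForm K m d)) (linForm a b)) k =
      2 * Nat.choose (m + (d - k) - 1) m := by
  rw [pz_rkPow]
  set N : (pzG K (Fin m) (d-k) × pzG K (Fin m) (d-k)) →ₗ[K] MvPolynomial (PIdx m d) K :=
    (pzE K m d).comp ((pzT a b k).comp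
      ((pzG K (Fin m) (d-k)).subtype.prodMap (pzG K (Fin m) (d-k)).subtype)) with hN
  have hNa : ∀ x : pzG K (Fin m) (d-k) × pzG K (Fin m) (d-k), N x =
    pzE K m d (pzB b ^ k * x.1.1, (k:K) • pzPhi K _ (pzB b ^ (k-1) * x.1.1) (pzA a) + x.2.1) :=
    fun x => rfl
  have hfin : Module.Finite K (pzG K (Fin m) (d-k)) := by
    have h1 : Finite {s : Fin m →₀ ℕ | s.degree < d - k} := by
      apply Set.Finite.to_subtype
      refine Set.Finite.subset ((Finset.range (d-k)).biUnion
        (fun j => Finset.finsuppAntidiag (Finset.univ : Finset (Fin m)) j)).finite_toSet ?_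
      intro s
      simp [Finsupp.degree_eq_sum, Finset.mem_finsuppAntidiag]
    exact Module.Finite.of_basis (basisRestrictSupport K {s : Fin m →₀ ℕ | s.degree < d - k})
  have hinj : Function.Injective N := by
    rw [injective_iff_map_eq_zero]
    rintro ⟨⟨p, hp⟩, ⟨g, hg⟩⟩ h
    rw [hNa] at h
    obtain ⟨h1, h2⟩ := pzE_inj _ _ h
    have hp0 : p = 0 := by
      by_cases hk : d ≤ k
      · rw [Nat.sub_eq_zero_of_le hk] at hp; exact pzG_zero hp
      have h3 := pz_nondeg hm _ h1
      have h4 := pzB_mulG b k hp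
      rw [pzG_mem, show d - k + k = d by omega] at h4
      have h5 : pzB b ^ k * p = 0 := by
        rw [← support_eq_empty, Finset.eq_empty_iff_forall_notMem]
        intro s hs
        exact absurd (h4 s hs) (not_lt.2 (h3 s hs))
      exact (mul_eq_zero.1 h5).resolve_left (pow_ne_zero _ (pzB_ne b j0 hj))
    subst hp0
    have hg0 : g = 0 := by simpa using h2
    subst hg0
    rfl
  have hrange : LinearMap.range (pzMap (perazzoForm K m d) (linForm a b ^ k)) = LinearMap.range N := by
    apply le_antisymm
    · rintro _ ⟨f, rfl⟩
      obtain ⟨p, g, hg, h⟩ := pz_V0_sub hd f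
      rw [pzMap_apply, h, pzE_Lpow]
      obtain ⟨p', p'', rfl, hp', hp''⟩ := pz_split (d - k) p
      have hz : pzE K m d (pzB b ^ k * p'', 0) = 0 := by
        rw [pzE_apply, map_zero, add_zero]
        refine Finset.sum_eq_zero fun α _ => ?_
        rw [mul_comm (pzB b ^ k), pzPhi_mul]
        have := pzG_act hp'' (pzB_pow_act b k (pzY_mem (K := K) hd α))
        rw [Nat.sub_self] at this
        rw [pzG_zero this, map_zero, mul_zero]
      have hc : (k:K) • pzPhi K _ (pzB b ^ (k-1) * p'') (pzA a) ∈ pzG K (Fin m) (d - k) := by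
        rcases Nat.eq_zero_or_pos k with rfl | hk
        · simp
        apply Submodule.smul_mem
        rw [mul_comm, pzPhi_mul]
        by_cases hkd : k < d
        · have := pzG_act hp'' (pzB_pow_act b (k-1) (pzA_mem hd a))
          exact pzG_mono (by omega) this
        · rw [show k - 1 = (k - d) + (d - 1) by omega, pow_add, pzPhi_mul, hab, map_zero, map_zero]
          exact Submodule.zero_mem _
      refine ⟨(⟨p', hp'⟩, ⟨_, Submodule.add_mem _ hc (pzB_pow_act b k hg)⟩), ?_⟩
      rw [hNa]
      conv_lhs => rw [← add_zero (pzE K m d _), ← hz, ← map_add]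
      congr 1
      ext1
      · simp [mul_add]
      · simp [mul_add, smul_add, add_assoc]
    · rintro _ ⟨⟨⟨p, hp⟩, ⟨h, hh⟩⟩, rfl⟩
      obtain ⟨g, hg, hgh⟩ := pzB_surj b j0 hj d k h hh
      obtain ⟨f, hf⟩ := pz_gen hm g hg
      refine ⟨pzI K m d p + f, ?_⟩
      rw [hNa, pzMap_apply, map_add, LinearMap.add_apply, hf, pzE_F, pzE_iota, ← map_add,
        Prod.mk_add_mk, pzE_Lpow]
      simp only [mul_one, add_zero, map_zero, zero_add, hgh]
  rw [hrange, LinearMap.finrank_range_of_inj hinj, Module.finrank_prod, pzG_finrank m _ hm, two_mul]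

theorem pz_hab (a : MIdx m d → K) (b : Fin m → K) (k : Fin m)
    (hb : ∀ i, i ≠ k → b i = 0) (ha : a (unitIdx m d k) = 0) :
    pzPhi K _ (pzB b ^ (d - 1)) (pzA a) = 0 := by
  have h1 : pzB b = C (b k) * X k := by
    rw [pzB, Finset.sum_eq_single k]
    · intro j _ hj; simp [hb j hj]
    · simp
  have h2 : (X k ^ (d-1) : MvPolynomial (Fin m) K) = monomial (Finsupp.single k (d-1)) 1 := by
    rw [X_pow_eq_monomial]
  rw [h1, mul_pow, pzPhi_mul, pzA, map_sum, h2]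
  rw [Finset.sum_eq_zero, map_zero]
  intro α _
  by_cases hα : α = unitIdx m d k
  · rw [hα, ha, zero_smul, map_zero]
  rw [map_smul, pzY_eq]
  obtain ⟨c, hc, hc'⟩ := pzPhi_monomial (K := K) (Finsupp.single k (d-1)) (Finsupp.equivFunOnFinite.symm α.1)
  have : c = 0 := by
    by_contra h0
    have h3 := hc'.1 h0
    rw [Finsupp.single_le_iff] at h3
    simp only [Finsupp.equivFunOnFinite_symm_apply_apply] at h3
    apply hα
    have h4 := α.2
    rw [← Finset.add_sum_erase _ _ (Finset.mem_univ k)] at h4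
    have h5 : ∑ i ∈ Finset.univ.erase k, α.1 i = 0 := by omega
    rw [Finset.sum_eq_zero_iff] at h5
    apply Subtype.ext
    funext i
    by_cases hi : i = k
    · subst hi; simp [unitIdx]; omega
    · simp [unitIdx, hi]; exact h5 i (by simp [hi])
  rw [hc, this]; simp

end model
end Perazzo

/-- Theorem 3.2(i): if (A) there is `k` with `b_k ≠ 0`, `b_i = 0` for `i ≠ k` and
`a_{(d-1)e_k} = 0`, or (B) `ℓ = ∑ b_j y_j ≠ 0`, then the Jordan type of `ℓ` in the full
Perazzo algebra `A_F` is `(d², (d-1)^{2·binom(m-1,m-2)}, …, 1^{2·binom(m+d-3,m-2)})`,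
i.e. each part `1 ≤ k ≤ d` occurs with multiplicity `2·binom(m+d-2-k, m-2)` and no part
exceeds `d`. -/
theorem jordanType_fullPerazzo_middle
    (K : Type*) [Field K] [CharZero K] (m d : ℕ) (hm : 2 ≤ m) (hd : 3 ≤ d)
    (a : MIdx m d → K) (b : Fin m → K)
    (hyp : (∃ k : Fin m, b k ≠ 0 ∧ (∀ i, i ≠ k → b i = 0) ∧ a (unitIdx m d k) = 0)
      ∨ ((∀ α, a α = 0) ∧ ∃ j, b j ≠ 0)) :
    IsJordanTypeMult (K := K)
      (Ideal.Quotient.mk (annIdeal (perazzoForm K m d)) (linForm a b))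
      (fun k => if k ≤ d then 2 * Nat.choose (m + d - 2 - k) (m - 2) else 0) := by
  obtain ⟨j0, hj, hab⟩ : ∃ j0, b j0 ≠ 0 ∧ pzPhi K _ (pzB b ^ (d - 1)) (pzA a) = 0 := by
    rcases hyp with ⟨k, hk, hb, ha⟩ | ⟨ha, j, hj⟩
    · exact ⟨k, hk, pz_hab a b k hb ha⟩
    · exact ⟨j, hj, by simp [pzA, ha]⟩
  intro k hk
  have hr := pz_rank (by omega) (by omega) a b j0 hj hab
  rw [hr, hr, hr]
  obtain ⟨m, rfl⟩ : ∃ m', m = m' + 2 := ⟨m - 2, by omega⟩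
  by_cases hkd : k ≤ d
  · simp only [if_pos hkd]
    obtain ⟨e, rfl⟩ : ∃ e, d = k + e := ⟨d - k, by omega⟩
    rw [show m + 2 + (k + e - (k - 1)) - 1 = m + e + 2 by omega,
      show m + 2 + (k + e - k) - 1 = m + e + 1 by omega,
      show m + 2 + (k + e) - 2 - k = m + e by omega, show m + 2 - 2 = m by omega]
    have h3 : (m + 2 + (k + e - (k + 1)) - 1).choose (m + 2) = (m + e).choose (m + 2) := by
      rcases Nat.eq_zero_or_pos e with rfl | he
      · rw [Nat.choose_eq_zero_of_lt (by omega), Nat.choose_eq_zero_of_lt (by omega)]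
      · congr 1; omega
    rw [h3, Nat.choose_succ_succ (m + e + 1) (m + 1), Nat.choose_succ_succ (m + e) (m + 1),
      Nat.choose_succ_succ (m + e) m]
    ring
  · simp only [if_neg hkd]
    rw [Nat.choose_eq_zero_of_lt (by omega), Nat.choose_eq_zero_of_lt (by omega),
      Nat.choose_eq_zero_of_lt (by omega)]
end

section
/- Let F = Σ_{|α|=d−1} X_α Y^α be the full Perazzo form and A_F = R/Ann_R(F) the full Perazzo algebra. Let ℓ = Σ_{|α|=d−1} a_α x_α ∈ [A_F]_1 be a nonzero linear form supported only on the x-variables. Then ℓ² ∈ Ann_R(F), so the multiplication map ×ℓ on A_F satisfies (×ℓ)² = 0, and the Jordan type of ℓ in A_F is P_{ℓ,A_F} = (2^a, 1^b), where a = dim_K A_{ℓ∘F} (with ℓ ∘ F = Σ a_α Y^α ∈ K[Y_1,…,Y_m]_{d−1} and A_{ℓ∘F} = K[y_1,…,y_m]/Ann(ℓ∘F)) and b = dim_K A_F − 2a. -/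
open MvPolynomial

/-- The polynomial `ℓ ∘ F = ∑_α a_α Y^α ∈ K[Y_1, …, Y_m]`, the result of applying the
linear form `ℓ = ∑_α a_α x_α` to the full Perazzo form `F`. -/
noncomputable def ellF {K : Type*} [CommSemiring K] {m d : ℕ}
    (a : MIdx m d → K) : MvPolynomial (Fin m) K :=
  ∑ α : MIdx m d, C (a α) * ∏ j, X j ^ (α.1 j)

section Helpers

variable {K : Type*} [Field K] {σ : Type*} [DecidableEq σ]

theorem pd_comm (i j : σ) (p : MvPolynomial σ K) :
    pderiv i (pderiv j p) = pderiv j (pderiv i p) := by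
  induction p using MvPolynomial.induction_on with
  | C a => simp
  | add p q hp hq => simp [hp, hq]
  | mul_X p k hp =>
    simp only [Derivation.leibniz, smul_eq_mul, map_add, hp, pderiv_X]
    have h : ∀ i j : σ, pderiv i (Pi.single (M := fun _ => MvPolynomial σ K) j 1 k) = 0 := by
      intro i j
      by_cases h2 : k = j <;> simp [Pi.single_apply, h2]
    rw [h, h]
    ring

theorem exists_act (K : Type*) [Field K] (σ : Type*) [DecidableEq σ] :
    ∃ Φ : MvPolynomial σ K →ₐ[K] Module.End K (MvPolynomial σ K),
      (∀ i, Φ (X i) = (pderiv i).toLinearMap) ∧ ∀ f F, Φ f F = diffAction f F := by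
  let s : Set (Module.End K (MvPolynomial σ K)) := Set.range fun i => (pderiv i).toLinearMap
  have hs : ∀ x ∈ s, ∀ y ∈ s, x * y = y * x := by
    rintro _ ⟨i, rfl⟩ _ ⟨j, rfl⟩
    exact LinearMap.ext (fun p => pd_comm i j p)
  letI : CommRing (Algebra.adjoin K s) := Algebra.adjoinCommRingOfComm K hs
  let φ : MvPolynomial σ K →ₐ[K] Algebra.adjoin K s :=
    aeval (fun i => ⟨(pderiv i).toLinearMap, Algebra.subset_adjoin ⟨i, rfl⟩⟩)
  have hX : ∀ i, ((Algebra.adjoin K s).val.comp φ) (X i) = (pderiv i).toLinearMap := by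
    intro i
    simp [φ]
  refine ⟨(Algebra.adjoin K s).val.comp φ, hX, ?_⟩
  generalize (Algebra.adjoin K s).val.comp φ = Φ at hX
  have hm : ∀ t : σ →₀ ℕ, Φ (monomial t 1) = diffOp t := by
    intro t
    rw [monomial_eq, Finsupp.prod, ← Finset.prod_map_toList, C_1, one_mul, map_list_prod, diffOp,
      List.map_map]
    congr 1
    apply List.map_congr_left
    intro i _
    simp [hX]
  intro f F
  conv_lhs => rw [f.as_sum]
  rw [map_sum, LinearMap.sum_apply, diffAction]
  refine Finset.sum_congr rfl fun t _ => ?_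
  rw [← hm, ← LinearMap.smul_apply, ← map_smul, smul_monomial, smul_eq_mul, mul_one]

noncomputable def act (K : Type*) [Field K] (σ : Type*) [DecidableEq σ] :
    MvPolynomial σ K →ₐ[K] Module.End K (MvPolynomial σ K) := (exists_act K σ).choose

theorem act_X (i : σ) (F : MvPolynomial σ K) : act K σ (X i) F = pderiv i F := by
  rw [act, (exists_act K σ).choose_spec.1]; rfl

theorem act_C (c : K) (F : MvPolynomial σ K) : act K σ (C c) F = c • F := by
  rw [← algebraMap_eq, AlgHom.commutes]; rfl

theorem act_eq (f F : MvPolynomial σ K) : act K σ f F = diffAction f F :=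
  (exists_act K σ).choose_spec.2 f F

theorem act_mul (f g F : MvPolynomial σ K) : act K σ (f * g) F = act K σ f (act K σ g F) := by
  rw [map_mul]; rfl

noncomputable def actOn (F : MvPolynomial σ K) : MvPolynomial σ K →ₗ[K] MvPolynomial σ K :=
  (LinearMap.applyₗ F).comp (act K σ).toLinearMap

theorem actOn_apply (f F : MvPolynomial σ K) : actOn F f = act K σ f F := rfl

theorem mem_ann (f F : MvPolynomial σ K) : f ∈ annIdeal F ↔ act K σ f F = 0 := by
  constructor
  · intro h
    rw [annIdeal] at h
    induction h using Submodule.span_induction with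
    | mem x h => rw [act_eq]; exact h
    | zero => simp
    | add x y _ _ hx hy => simp [hx, hy]
    | smul r x _ hx => rw [smul_eq_mul, act_mul, hx, map_zero]
  · intro h
    exact Ideal.subset_span (by rw [Set.mem_ofPred_eq, ← act_eq, h])

theorem finrank_range_of_ker {V W W' : Type*} [AddCommGroup V] [Module K V] [AddCommGroup W]
    [Module K W] [AddCommGroup W'] [Module K W'] (f : V →ₗ[K] W) (g : V →ₗ[K] W')
    (h : LinearMap.ker f = LinearMap.ker g) :
    Module.finrank K (LinearMap.range f) = Module.finrank K (LinearMap.range g) :=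
  LinearEquiv.finrank_eq (f.quotKerEquivRange.symm ≪≫ₗ
    Submodule.quotEquivOfEq _ _ h ≪≫ₗ g.quotKerEquivRange)

theorem ker_mk (F : MvPolynomial σ K) :
    LinearMap.ker (Ideal.Quotient.mkₐ K (annIdeal F)).toLinearMap = LinearMap.ker (actOn F) := by
  ext f
  simp only [LinearMap.mem_ker, actOn_apply, AlgHom.toLinearMap_apply, Ideal.Quotient.mkₐ_eq_mk]
  rw [Ideal.Quotient.eq_zero_iff_mem, mem_ann]

theorem range_mk (I : Ideal (MvPolynomial σ K)) :
    LinearMap.range (Ideal.Quotient.mkₐ K I).toLinearMap = ⊤ :=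
  LinearMap.range_eq_top.2 (Ideal.Quotient.mkₐ_surjective K I)

theorem finrank_quot (F : MvPolynomial σ K) :
    Module.finrank K (MvPolynomial σ K ⧸ annIdeal F) =
      Module.finrank K (LinearMap.range (actOn F)) := by
  rw [← finrank_range_of_ker _ _ (ker_mk F), range_mk, finrank_top]

theorem pd_degree (k : σ) (F : MvPolynomial σ K) :
    (pderiv k F).totalDegree ≤ F.totalDegree := by
  rw [← mem_restrictTotalDegree]
  have e : pderiv k F = ∑ s ∈ F.support, pderiv k (monomial s (F.coeff s)) := by
    rw [← map_sum, ← F.as_sum]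
  rw [e]
  refine Submodule.sum_mem _ fun s hs => ?_
  rw [pderiv_monomial, mem_restrictTotalDegree]
  refine (totalDegree_monomial_le _ _).trans (le_trans ?_ (le_totalDegree hs))
  exact Finsupp.sum_le_sum_index tsub_le_self (fun _ _ _ _ h => h) (fun _ _ => rfl)

theorem act_mem (F : MvPolynomial σ K) (N : ℕ) (hF : F ∈ restrictTotalDegree σ K N)
    (f : MvPolynomial σ K) : act K σ f F ∈ restrictTotalDegree σ K N := by
  induction f using MvPolynomial.induction_on generalizing F with
  | C a => rw [act_C]; exact Submodule.smul_mem _ _ hF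
  | add p q hp hq => rw [map_add]; exact Submodule.add_mem _ (hp F hF) (hq F hF)
  | mul_X p k hp =>
    rw [act_mul, act_X]
    apply hp
    rw [mem_restrictTotalDegree] at hF ⊢
    exact (pd_degree k F).trans hF

theorem finite_quot [Finite σ] (F : MvPolynomial σ K) :
    Module.Finite K (MvPolynomial σ K ⧸ annIdeal F) := by
  have : Module.Finite K (restrictTotalDegree σ K F.totalDegree) := inferInstance
  have h : LinearMap.range (actOn F) ≤ restrictTotalDegree σ K F.totalDegree := by
    rintro _ ⟨f, rfl⟩
    exact act_mem F _ (by rw [mem_restrictTotalDegree]) f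
  have h2 : Module.Finite K (LinearMap.range (actOn F)) := Submodule.finiteDimensional_of_le h
  have e := (LinearMap.quotKerEquivRange (actOn F)).symm ≪≫ₗ
    Submodule.quotEquivOfEq _ _ (ker_mk F).symm ≪≫ₗ
    LinearMap.quotKerEquivOfSurjective _ (Ideal.Quotient.mkₐ_surjective K (annIdeal F))
  exact Module.Finite.equiv e

theorem rank_mul (F l : MvPolynomial σ K) :
    Module.finrank K (LinearMap.range
      (LinearMap.mulLeft K (Ideal.Quotient.mk (annIdeal F) l))) =
    Module.finrank K (LinearMap.range (actOn (act K σ l F))) := by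
  rw [← LinearMap.range_comp_of_range_eq_top
    (f := (Ideal.Quotient.mkₐ K (annIdeal F)).toLinearMap) _ (range_mk _)]
  apply finrank_range_of_ker
  ext f
  simp only [LinearMap.mem_ker, actOn_apply, AlgHom.toLinearMap_apply, Ideal.Quotient.mkₐ_eq_mk,
    LinearMap.comp_apply, LinearMap.mulLeft_apply]
  rw [← map_mul, Ideal.Quotient.eq_zero_iff_mem, mem_ann, mul_comm, act_mul]

variable {τ : Type*} [DecidableEq τ]

noncomputable def prj : MvPolynomial (τ ⊕ σ) K →ₐ[K] MvPolynomial σ K :=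
  aeval (Sum.elim (fun _ => 0) X)

theorem pderiv_inl_rename (i : τ) (h : MvPolynomial σ K) :
    pderiv (Sum.inl i : τ ⊕ σ) (rename Sum.inr h) = 0 := by
  induction h using MvPolynomial.induction_on with
  | C a => simp
  | add p q hp hq => simp [hp, hq]
  | mul_X p k hp => simp [Derivation.leibniz, hp, pderiv_X]

theorem act_rename (f : MvPolynomial (τ ⊕ σ) K) (h : MvPolynomial σ K) :
    act K (τ ⊕ σ) f (rename Sum.inr h) = rename Sum.inr (act K σ (prj f) h) := by
  induction f using MvPolynomial.induction_on generalizing h with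
  | C a => rw [act_C, prj, aeval_C, algebraMap_eq, act_C, map_smul]
  | add p q hp hq => simp [hp, hq]
  | mul_X p k hp =>
    rw [act_mul, act_X, map_mul]
    rcases k with k | k
    · rw [pderiv_inl_rename]
      simp [prj]
    · rw [pderiv_rename Sum.inr_injective, hp, act_mul]
      simp [prj, act_X]

theorem finrank_rename (h : MvPolynomial σ K) :
    Module.finrank K (LinearMap.range (actOn (rename (Sum.inr : σ → τ ⊕ σ) h))) =
    Module.finrank K (LinearMap.range (actOn h)) := by
  have e : actOn (rename (Sum.inr : σ → τ ⊕ σ) h) =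
      (rename Sum.inr).toLinearMap ∘ₗ (actOn h ∘ₗ (prj (τ := τ)).toLinearMap) := by
    exact LinearMap.ext (fun f => act_rename f h)
  have hs : Function.Surjective (prj (K := K) (σ := σ) (τ := τ)) := by
    intro p
    refine ⟨rename Sum.inr p, ?_⟩
    rw [prj, aeval_rename]
    simp
  rw [e, LinearMap.range_comp, LinearMap.range_comp_of_range_eq_top _ (LinearMap.range_eq_top.2 hs)]
  exact LinearEquiv.finrank_eq (Submodule.equivMapOfInjective _
    (rename_injective _ Sum.inr_injective) _).symm

theorem act_lin (m d : ℕ) (a : MIdx m d → K) :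
    act K _ (linForm a (fun _ => 0)) (perazzoForm K m d) = rename Sum.inr (ellF a) := by
  have h : ∀ α : MIdx m d, pderiv (Sum.inl α) (perazzoForm K m d) =
      rename Sum.inr (∏ j, X j ^ (α.1 j) : MvPolynomial (Fin m) K) := by
    intro α
    have h0 : ∀ β : MIdx m d, (∏ j, X (Sum.inr j) ^ (β.1 j) : MvPolynomial (PIdx m d) K) =
      rename Sum.inr (∏ j, X j ^ (β.1 j) : MvPolynomial (Fin m) K) := by intro β; simp
    simp only [perazzoForm, h0, map_sum, Derivation.leibniz, pderiv_inl_rename, smul_zero,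
      zero_add, pderiv_X, smul_eq_mul]
    rw [Finset.sum_eq_single α]
    · simp
    · intro β _ hb
      simp [Pi.single_apply, hb]
    · simp
  simp only [linForm, ellF, map_zero, zero_mul, Finset.sum_const_zero, add_zero, map_sum,
    LinearMap.sum_apply]
  refine Finset.sum_congr rfl fun α _ => ?_
  rw [act_mul, act_X, act_C, h, map_mul, rename_C, smul_eq_C_mul]

end Helpers

/-- Theorem 3.2(iii): if `ℓ = ∑ a_α x_α` is a nonzero linear form supported only on the
`x`-variables, then `ℓ² ∈ Ann(F)`, the multiplication map `×ℓ` on `A_F` squares to zero,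
and the Jordan type of `ℓ` in `A_F` is `(2^a, 1^b)` with `a = dim_K A_{ℓ∘F}` and
`b = dim_K A_F - 2a`. -/
theorem jordanType_fullPerazzo_min
    (K : Type*) [Field K] [CharZero K] (m d : ℕ) (hm : 2 ≤ m) (hd : 3 ≤ d)
    (a : MIdx m d → K) (ha : a ≠ 0) :
    (linForm a (fun _ => 0)) ^ 2 ∈ annIdeal (perazzoForm K m d) ∧
    (LinearMap.mulLeft K
        (Ideal.Quotient.mk (annIdeal (perazzoForm K m d)) (linForm a (fun _ => 0)))) ^ 2 = 0 ∧
    IsJordanTypeMult (K := K)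
      (Ideal.Quotient.mk (annIdeal (perazzoForm K m d)) (linForm a (fun _ => 0)))
      (fun k =>
        if k = 2 then Module.finrank K (MvPolynomial (Fin m) K ⧸ annIdeal (ellF a))
        else if k = 1 then
          Module.finrank K
              (MvPolynomial (PIdx m d) K ⧸ annIdeal (perazzoForm K m d))
            - 2 * Module.finrank K (MvPolynomial (Fin m) K ⧸ annIdeal (ellF a))
        else 0) := by
  have hl := act_lin (K := K) m d a
  have hsq : (linForm a (fun _ => 0)) ^ 2 ∈ annIdeal (perazzoForm K m d) := by
    rw [mem_ann, pow_two, act_mul, hl, act_rename]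
    simp [linForm, prj]
  have hz : (LinearMap.mulLeft K
        (Ideal.Quotient.mk (annIdeal (perazzoForm K m d)) (linForm a (fun _ => 0)))) ^ 2 = 0 := by
    rw [LinearMap.pow_mulLeft, ← map_pow, Ideal.Quotient.eq_zero_iff_mem.2 hsq,
      LinearMap.mulLeft_zero_eq_zero]
  refine ⟨hsq, hz, ?_⟩
  have hfin := finite_quot (perazzoForm K m d)
  have hr := rank_mul (perazzoForm K m d) (linForm a (fun _ => 0))
  rw [hl, finrank_rename, ← finrank_quot] at hr
  rw [← hr]
  generalize (Ideal.Quotient.mk (annIdeal (perazzoForm K m d)) (linForm a (fun _ => 0))) = l at *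
  have h0 : rkPow (K := K) l 0 =
      Module.finrank K (MvPolynomial (PIdx m d) K ⧸ annIdeal (perazzoForm K m d)) := by
    rw [rkPow, pow_zero, Module.End.one_eq_id, LinearMap.range_id, finrank_top]
  have h1 : rkPow (K := K) l 1 = Module.finrank K (LinearMap.range (LinearMap.mulLeft K l)) := by
    rw [rkPow, pow_one]
  have h2 : ∀ k, 2 ≤ k → rkPow (K := K) l k = 0 := by
    intro k hk
    rw [rkPow, pow_eq_zero_of_le hk hz, LinearMap.range_zero, finrank_bot]
  have hle : LinearMap.range (LinearMap.mulLeft K l) ≤ LinearMap.ker (LinearMap.mulLeft K l) := by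
    rw [LinearMap.range_le_ker_iff]
    rw [pow_two] at hz
    exact hz
  have hn := LinearMap.finrank_range_add_finrank_ker (LinearMap.mulLeft K l)
  have hle' := Submodule.finrank_mono hle
  intro k hk
  rcases Nat.lt_or_ge k 3 with h3 | h3
  · interval_cases k
    · simp only [h0, h1, h2 2 le_rfl, Nat.sub_self, Nat.reduceAdd]
      simp
      omega
    · simp [h1, h2]
  · rw [h2 _ (by omega), h2 _ (by omega), h2 _ (by omega)]
    have e1 : k ≠ 1 := by omega
    have e2 : k ≠ 2 := by omega
    simp [e1, e2]
end

section
/- Fix integers d ≥ 3 and m ≥ 2, and set D = 2·binom(d+m−1, m). Define a_max = binom((d−1)/2 + m−1, m−1) + 2·Σ_{i=0}^{(d−3)/2} binom(i+m−1, m−1) if d is odd, and a_max = 2·Σ_{i=0}^{(d−2)/2} binom(i+m−1, m−1) if d is even. Consider the following partitions of D: Q_a = (2^a, 1^{D−2a}) for each integer d ≤ a ≤ a_max; P_mid, which has exactly 2·binom(m+d−2−k, m−2) parts equal to k for each 1 ≤ k ≤ d; and P_max, which has one part d+1, no part d, exactly 2m−1 parts equal to d−1, and exactly 2·binom(m+d−2−k,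 m−2) parts equal to k for each 1 ≤ k ≤ d−2. Then in the dominance order these form a chain: Q_d ≤ Q_{d+1} ≤ ⋯ ≤ Q_{a_max} ≤ P_mid ≤ P_max. -/
open MvPolynomial

/-- The maximal possible value of `dim_K A_{ℓ∘F}`: the dimension of the degree-`≤ d-1`
part of a compressed Gorenstein algebra of codimension `m` and socle degree `d - 1`. -/
noncomputable def aMax (m d : ℕ) : ℕ :=
  if d % 2 = 1 then
    Nat.choose ((d - 1) / 2 + m - 1) (m - 1)
      + 2 * ∑ i ∈ Finset.range ((d - 3) / 2 + 1), Nat.choose (i + m - 1) (m - 1)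
  else
    2 * ∑ i ∈ Finset.range ((d - 2) / 2 + 1), Nat.choose (i + m - 1) (m - 1)

/-- The sum of the `k` largest parts of the partition given by the multiset `P`. -/
noncomputable def topSum (P : Multiset ℕ) (k : ℕ) : ℕ :=
  ((P.sort (· ≥ ·)).take k).sum

/-- Dominance order on partitions (of the same number), given as multisets of parts:
`P` dominates `Q` if for every `k` the sum of the `k` largest parts of `Q` is at most
the sum of the `k` largest parts of `P`. -/
def Dominates (P Q : Multiset ℕ) : Prop := ∀ k : ℕ, topSum Q k ≤ topSum P k

/-- The partition `(2^a, 1^{D - 2a})` of `D`. -/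
def Qpart (D a : ℕ) : Multiset ℕ :=
  Multiset.replicate a 2 + Multiset.replicate (D - 2 * a) 1

/-- The partition `(d^2, (d-1)^{2·binom(m-1,m-2)}, …, 1^{2·binom(m+d-3,m-2)})`:
exactly `2·binom(m+d-2-k, m-2)` parts equal to `k`, for each `1 ≤ k ≤ d`. -/
def Pmid (m d : ℕ) : Multiset ℕ :=
  ∑ k ∈ Finset.Icc 1 d, Multiset.replicate (2 * Nat.choose (m + d - 2 - k) (m - 2)) k

/-- The partition `(d+1, (d-1)^{2m-1}, (d-2)^{2·binom(m,m-2)}, …, 1^{2·binom(m+d-3,m-2)})`: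
one part `d+1`, no part `d`, exactly `2m - 1` parts equal to `d - 1`, and exactly
`2·binom(m+d-2-k, m-2)` parts equal to `k` for `1 ≤ k ≤ d - 2`. -/
def Pmax (m d : ℕ) : Multiset ℕ :=
  {d + 1} + Multiset.replicate (2 * m - 1) (d - 1)
    + ∑ k ∈ Finset.Icc 1 (d - 2), Multiset.replicate (2 * Nat.choose (m + d - 2 - k) (m - 2)) k


lemma topSum_coe (l : List ℕ) (h : l.Pairwise (· ≥ ·)) (k : ℕ) :
    topSum (l : Multiset ℕ) k = (l.take k).sum := by
  have : Multiset.sort (l : Multiset ℕ) (· ≥ ·) = l := by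
    apply List.Perm.eq_of_pairwise (le := (· ≥ ·)) _ (Multiset.pairwise_sort _ _) h
    · exact Multiset.coe_eq_coe.1 (Multiset.sort_eq _ _)
    · intro a b _ _ h1 h2
      exact le_antisymm h2 h1
  rw [topSum, this]

lemma topSum_Q (D a k : ℕ) (h : 2 * a ≤ D) :
    topSum (Qpart D a) k ≤ 2 * k ∧ topSum (Qpart D a) k ≤ a + k ∧ topSum (Qpart D a) k ≤ D := by
  have e : Qpart D a = ((List.replicate a 2 ++ List.replicate (D - 2 * a) 1 : List ℕ) : Multiset ℕ) := by
    rw [Qpart, ← Multiset.coe_add, Multiset.coe_replicate, Multiset.coe_replicate]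
  rw [e, topSum_coe]
  · simp [List.take_append, List.take_replicate]
    omega
  · rw [List.pairwise_append]
    refine ⟨by simp [List.pairwise_replicate], by simp [List.pairwise_replicate], ?_⟩
    intro x hx y hy
    rw [List.eq_of_mem_replicate hx, List.eq_of_mem_replicate hy]; omega

lemma list_bound (l : List ℕ) : l.Pairwise (· ≥ ·) → ∀ k a D : ℕ, l.length + a ≤ D → D ≤ l.sum →
    2 * k ≤ (l.take k).sum ∨ a + k ≤ (l.take k).sum ∨ D ≤ (l.take k).sum := by
  intro h k a D h1 h2
  by_cases hk : l.length ≤ k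
  · right; right; rwa [List.take_of_length_le hk]
  push Not at hk
  by_cases h3 : ∀ x ∈ l.take k, 2 ≤ x
  · left
    have := List.card_nsmul_le_sum (l.take k) 2 h3
    simp [List.length_take] at this
    rw [min_eq_left hk.le] at this
    omega
  · right; left
    push Not at h3
    obtain ⟨x, hx, hx2⟩ := h3
    have h4 : ∀ y ∈ l.drop k, y ≤ 1 := by
      intro y hy
      rw [← List.take_append_drop k l, List.pairwise_append] at h
      have := h.2.2 x hx y hy
      omega
    have h5 := List.sum_le_card_nsmul (l.drop k) 1 h4
    have h6 : (l.take k).sum + (l.drop k).sum = l.sum := by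
      rw [← List.sum_append, List.take_append_drop]
    simp at h5
    omega

lemma dom_Q (P : Multiset ℕ) (D a : ℕ) (h : 2 * a ≤ D) (h1 : P.card + a ≤ D) (h2 : D ≤ P.sum) :
    Dominates P (Qpart D a) := by
  intro k
  obtain ⟨q1, q2, q3⟩ := topSum_Q D a k h
  have := list_bound (P.sort (· ≥ ·)) (Multiset.pairwise_sort _ _) k a D
    (by simpa using h1) (by
      rw [← Multiset.sum_coe, Multiset.sort_eq]; exact h2)
  change _ ≤ ((P.sort (· ≥ ·)).take k).sum
  omega

lemma dom_QQ (D a : ℕ) : Dominates (Qpart D (a + 1)) (Qpart D a) := by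
  by_cases h : 2 * a + 1 ≤ D
  · apply dom_Q _ _ _ (by omega)
    · simp [Qpart]; omega
    · simp [Qpart]; omega
  · intro k
    have e : ∀ b, a ≤ b → Qpart D b = ((List.replicate b 2 : List ℕ) : Multiset ℕ) := by
      intro b hb
      have : D - 2 * b = 0 := by omega
      simp only [Qpart, this, Multiset.replicate_zero, add_zero, Multiset.coe_replicate]
    rw [e a le_rfl, e (a+1) (by omega), topSum_coe _ (by simp [List.pairwise_replicate]),
      topSum_coe _ (by simp [List.pairwise_replicate])]
    simp [List.take_replicate]
    try omega

lemma topSum_two (x y : ℕ) (R : Multiset ℕ) (hxy : y ≤ x) (hR : ∀ z ∈ R, z ≤ y) (k : ℕ) :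
    topSum (x ::ₘ y ::ₘ R) k = ((x :: y :: R.sort (· ≥ ·)).take k).sum := by
  rw [← topSum_coe]
  · congr 1
    rw [← Multiset.cons_coe, ← Multiset.cons_coe, Multiset.sort_eq]
  · simp only [List.pairwise_cons, List.mem_cons, Multiset.mem_sort]
    refine ⟨?_, fun z hz => hR z hz, Multiset.pairwise_sort _ _⟩
    rintro z (rfl | hz)
    · exact hxy
    · exact (hR z hz).trans hxy

lemma dom_max (m d : ℕ) (hm : 2 ≤ m) (hd : 3 ≤ d) : Dominates (Pmax m d) (Pmid m d) := by
  obtain ⟨n, rfl⟩ := Nat.exists_eq_add_of_le hm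
  obtain ⟨e, rfl⟩ := Nat.exists_eq_add_of_le hd
  set S : Multiset ℕ := ∑ k ∈ Finset.Icc 1 (e + 1),
    Multiset.replicate (2 * Nat.choose (2 + n + (3 + e) - 2 - k) (2 + n - 2)) k with hS
  set R : Multiset ℕ := Multiset.replicate (2 * (n + 1)) (e + 2) + S with hRdef
  have hR : ∀ z ∈ R, z ≤ e + 2 := by
    intro z hz
    rw [hRdef, Multiset.mem_add] at hz
    rcases hz with hz | hz
    · exact (Multiset.eq_of_mem_replicate hz).le
    · rw [hS, Multiset.mem_sum] at hz
      obtain ⟨i, hi, hz⟩ := hz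
      rw [Multiset.eq_of_mem_replicate hz]
      simp at hi; omega
  have e1 : Pmax (2 + n) (3 + e) = (e + 4) ::ₘ (e + 2) ::ₘ R := by
    have a1 : 2 * (2 + n) - 1 = 2 * (n + 1) + 1 := by omega
    have a2 : 3 + e - 1 = e + 2 := by omega
    have a3 : 3 + e - 2 = e + 1 := by omega
    have a4 : 3 + e + 1 = e + 4 := by omega
    rw [Pmax, a1, a2, a3, a4, ← hS, Multiset.replicate_succ, hRdef]
    simp [Multiset.singleton_add]
    exact Multiset.cons_swap _ _ _
  have e2 : Pmid (2 + n) (3 + e) = (e + 3) ::ₘ (e + 3) ::ₘ R := by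
    have a1 : 3 + e = (e + 1) + 1 + 1 := by omega
    rw [Pmid, hRdef]
    rw [show Finset.Icc 1 (3 + e) = Finset.Icc 1 (e + 1 + 1 + 1) by rw [a1]]
    rw [Finset.sum_Icc_succ_top (by omega), Finset.sum_Icc_succ_top (by omega), ← hS]
    have b1 : 2 + n + (3 + e) - 2 - (e + 1 + 1) = n + 1 := by omega
    have b2 : 2 + n + (3 + e) - 2 - (e + 1 + 1 + 1) = n := by omega
    have b3 : 2 + n - 2 = n := by omega
    rw [b1, b2, b3, Nat.choose_self, Nat.choose_succ_self_right]
    have : Multiset.replicate (2 * 1) (e + 1 + 1 + 1) = (e + 3) ::ₘ {e + 3} := by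
      rfl
    rw [this, add_comm S, add_comm]
    simp [Multiset.cons_add]
  intro k
  rw [e1, e2, topSum_two _ _ _ (by omega) hR,
    topSum_two _ _ _ (by omega) (fun z hz => (hR z hz).trans (by omega))]
  rcases k with _ | _ | k
  · simp
  · simp
  · simp; omega

lemma hockey (n d : ℕ) : ∑ j ∈ Finset.range d, Nat.choose (j + n) n = Nat.choose (d + n) (n + 1) := by
  induction d with
  | zero => simp
  | succ d ih =>
    rw [Finset.sum_range_succ, ih, show d + 1 + n = (d + n) + 1 by omega, Nat.choose_succ_succ']
    omega

lemma hockey2 (n d : ℕ) :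
    ∑ j ∈ Finset.range d, (d - j) * Nat.choose (j + n) n = Nat.choose (d + n + 1) (n + 2) := by
  induction d with
  | zero => simp
  | succ d ih =>
    have : ∀ j ∈ Finset.range (d + 1), (d + 1 - j) * Nat.choose (j + n) n
        = (d - j) * Nat.choose (j + n) n + Nat.choose (j + n) n := by
      intro j hj
      have : j < d + 1 := by simpa using hj
      rw [show d + 1 - j = (d - j) + 1 by omega, add_mul, one_mul]
    rw [Finset.sum_congr rfl this, Finset.sum_add_distrib, hockey, Finset.sum_range_succ, ih,
      show d + 1 + n + 1 = (d + n + 1) + 1 by omega, Nat.choose_succ_succ' (d + n + 1) (n + 1)]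
    simp [show d + 1 + n = d + n + 1 by omega]
    rw [show n + 1 + 1 = n + 2 from rfl]
    omega

lemma Pmid_eq (n d : ℕ) : Pmid (2 + n) d =
    ∑ j ∈ Finset.range d, Multiset.replicate (2 * Nat.choose (j + n) n) (d - j) := by
  rw [Pmid]
  refine Finset.sum_nbij' (fun k => d - k) (fun j => d - j) ?_ ?_ ?_ ?_ ?_
  · intro a ha; simp at *; omega
  · intro a ha; simp at *; omega
  · intro a ha; simp at *; omega
  · intro a ha; simp at *; omega
  · intro a ha
    simp at ha
    rw [show 2 + n + d - 2 - a = d - a + n by omega, show 2 + n - 2 = n by omega,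
      show d - (d - a) = a by omega]

lemma Pmid_card (n d : ℕ) : (Pmid (2 + n) d).card = 2 * Nat.choose (d + n) (n + 1) := by
  rw [Pmid_eq, Multiset.card_sum]
  simp only [Multiset.card_replicate]
  rw [← Finset.mul_sum, hockey]

lemma Pmid_sum (n d : ℕ) : (Pmid (2 + n) d).sum = 2 * Nat.choose (d + n + 1) (n + 2) := by
  rw [Pmid_eq, Multiset.sum_sum, ← hockey2, Finset.mul_sum]
  refine Finset.sum_congr rfl fun j _ => ?_
  rw [Multiset.sum_replicate, smul_eq_mul]; ring

lemma half_sum (f : ℕ → ℕ) (hf : Monotone f) (h s : ℕ) :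
    ∑ i ∈ Finset.range h, f i ≤ ∑ i ∈ Finset.range h, f (s + i) :=
  Finset.sum_le_sum fun i _ => hf (by omega)

lemma aMax_bounds (n d : ℕ) (hd : 3 ≤ d) :
    aMax (2 + n) d ≤ Nat.choose (d + n + 1) (n + 2) ∧
    aMax (2 + n) d ≤ 2 * Nat.choose (d + n) (n + 2) := by
  set f : ℕ → ℕ := fun i => Nat.choose (i + (n + 1)) (n + 1) with hf
  have hmono : Monotone f := fun a b hab => Nat.choose_le_choose _ (by omega)
  have c1 : Nat.choose (d + n + 1) (n + 2) = ∑ i ∈ Finset.range d, f i := by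
    rw [hf, hockey, add_assoc]
  have c2 : Nat.choose (d + n) (n + 2) = ∑ i ∈ Finset.range (d - 1), f i := by
    rw [hf, hockey]; congr 1; omega
  have hsub : ∀ i, Nat.choose (i + (2 + n) - 1) (2 + n - 1) = f i := by
    intro i
    rw [hf, show i + (2 + n) - 1 = i + (n + 1) by omega, show 2 + n - 1 = n + 1 by omega]
  have hle : ∀ a b, a ≤ b → ∑ i ∈ Finset.range a, f i ≤ ∑ i ∈ Finset.range b, f i :=
    fun a b hab => Finset.sum_le_sum_of_subset (Finset.range_subset_range.2 hab)
  rw [c1, c2, aMax]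
  simp only [hsub]
  split_ifs with h
  · obtain ⟨t, rfl⟩ : ∃ t, d = 2 * t + 3 := ⟨(d - 3) / 2, by omega⟩
    rw [show (2 * t + 3 - 1) / 2 = t + 1 by omega, show (2 * t + 3 - 3) / 2 + 1 = t + 1 by omega]
    constructor
    · rw [show 2 * t + 3 = (t + 1 + 1) + (t + 1) by omega, Finset.sum_range_add _ (t + 1 + 1),
        Finset.sum_range_succ _ (t + 1)]
      have := half_sum f hmono (t + 1) (t + 1 + 1)
      omega
    · have := hle (t + 1 + 1) (2 * t + 3 - 1) (by omega)
      rw [Finset.sum_range_succ _ (t + 1)] at this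
      omega
  · obtain ⟨t, rfl⟩ : ∃ t, d = 2 * t + 4 := ⟨(d - 4) / 2, by omega⟩
    rw [show (2 * t + 4 - 2) / 2 + 1 = t + 2 by omega]
    constructor
    · rw [show 2 * t + 4 = (t + 2) + (t + 2) by omega, Finset.sum_range_add _ (t + 2)]
      have := half_sum f hmono (t + 2) (t + 2)
      omega
    · have := hle (t + 2) (2 * t + 4 - 1) (by omega)
      omega

/-- Corollary 3.4: the possible linear Jordan types of a full Perazzo algebra form a
chain in the dominance order:
`(2^d, 1^{D-2d}) ≤ (2^{d+1}, 1^{D-2(d+1)}) ≤ ⋯ ≤ (2^{a_max}, 1^{D-2a_max}) ≤ P_mid ≤ P_max`. -/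
theorem jordanTypes_fullPerazzo_chain (m d : ℕ) (hm : 2 ≤ m) (hd : 3 ≤ d)
    (D : ℕ) (hD : D = 2 * Nat.choose (d + m - 1) m) :
    (∀ a : ℕ, d ≤ a → a < aMax m d → Dominates (Qpart D (a + 1)) (Qpart D a)) ∧
    Dominates (Pmid m d) (Qpart D (aMax m d)) ∧
    Dominates (Pmax m d) (Pmid m d) := by
  refine ⟨fun a _ _ => dom_QQ D a, ?_, dom_max m d hm hd⟩
  obtain ⟨n, rfl⟩ := Nat.exists_eq_add_of_le hm
  obtain ⟨b1, b2⟩ := aMax_bounds n d hd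
  rw [show d + (2 + n) - 1 = d + n + 1 by omega, show 2 + n = n + 2 by omega] at hD
  apply dom_Q
  · omega
  · rw [Pmid_card, hD, Nat.choose_succ_succ', show n + 1 + 1 = n + 2 from rfl]
    omega
  · rw [Pmid_sum, hD]
end

section
/- Let F = Σ_{|α|=d−1} X_α Y^α be the full Perazzo form and A_F = R/Ann_R(F) the full Perazzo algebra. Then dim_K A_F = 2·binom(d+m−1, m). -/
open MvPolynomial

section Aux

/-- Product of factorials. -/
def wF {σ : Type*} [Fintype σ] (t : σ →₀ ℕ) : ℕ := ∏ i, (t i).factorial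

lemma wF_ne {σ : Type*} [Fintype σ] (t : σ →₀ ℕ) : wF t ≠ 0 :=
  Finset.prod_ne_zero_iff.2 fun i _ => Nat.factorial_ne_zero _

lemma wF_single {σ : Type*} [Fintype σ] [DecidableEq σ] (t : σ →₀ ℕ) (i : σ) :
    wF (t + Finsupp.single i 1) = (t i + 1) * wF t := by
  unfold wF
  rw [← Finset.mul_prod_erase _ _ (Finset.mem_univ i),
    ← Finset.mul_prod_erase _ (fun i => (t i).factorial) (Finset.mem_univ i)]
  have : ∀ j ∈ Finset.univ.erase i, ((t + Finsupp.single i 1 : σ →₀ ℕ) j).factorial = (t j).factorial := by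
    intro j hj
    rw [Finsupp.add_apply, Finsupp.single_eq_of_ne (Finset.ne_of_mem_erase hj), add_zero]
  rw [Finset.prod_congr rfl this]
  simp [Nat.factorial_succ, mul_assoc]

/-- `D` is a shift by `u` in divided-power coordinates. -/
def IsShift {K : Type*} [Field K] {σ : Type*} [Fintype σ]
    (D : Module.End K (MvPolynomial σ K)) (u : σ →₀ ℕ) : Prop :=
  ∀ F t, (wF t : K) * coeff t (D F) = (wF (t + u) : K) * coeff (t + u) F

variable {K : Type*} [Field K] {σ : Type*} [Fintype σ] [DecidableEq σ]

lemma isShift_one : IsShift (1 : Module.End K (MvPolynomial σ K)) 0 := by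
  intro F t; simp

lemma IsShift.mul {D D' : Module.End K (MvPolynomial σ K)} {u u' : σ →₀ ℕ}
    (h : IsShift D u) (h' : IsShift D' u') : IsShift (D * D') (u + u') := by
  intro F t
  rw [Module.End.mul_apply, h, h', add_assoc]

lemma isShift_pderiv (i : σ) :
    IsShift ((MvPolynomial.pderiv i).toLinearMap : Module.End K (MvPolynomial σ K))
      (Finsupp.single i 1) := by
  intro F t
  change _ * coeff t (pderiv i F) = _
  rw [coeff_pderiv, wF_single]
  push_cast
  ring

lemma IsShift.pow {D : Module.End K (MvPolynomial σ K)} {u : σ →₀ ℕ}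
    (h : IsShift D u) (n : ℕ) : IsShift (D ^ n) (n • u) := by
  induction n with
  | zero => simpa using isShift_one
  | succ n ih => rw [pow_succ, succ_nsmul]; exact ih.mul h

lemma isShift_diffOp (s : σ →₀ ℕ) : IsShift (diffOp (K := K) s) s := by
  have key : ∀ l : List σ, IsShift (K := K) ((l.map fun i =>
    ((MvPolynomial.pderiv i).toLinearMap : Module.End K (MvPolynomial σ K)) ^ s i).prod)
      ((l.map fun i => s i • Finsupp.single i 1).sum) := by
    intro l
    induction l with
    | nil => simpa using isShift_one
    | cons a l ih =>
      simp only [List.map_cons, List.prod_cons, List.sum_cons]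
      exact ((isShift_pderiv a).pow _).mul ih
  have h := key s.support.toList
  have e : (s.support.toList.map fun i => s i • Finsupp.single i 1).sum = s := by
    rw [Finset.sum_map_toList]
    conv_rhs => rw [← Finsupp.sum_single s]
    simp [Finsupp.sum]
  rw [e] at h
  exact h

/-- The functional attached to `F`. -/
noncomputable def ell (F : MvPolynomial σ K) : MvPolynomial σ K →ₗ[K] K :=
  (basisMonomials σ K).constr K (fun s => (wF s : K) * coeff s F)

lemma ell_monomial (F : MvPolynomial σ K) (s : σ →₀ ℕ) (a : K) :
    ell F (monomial s a) = a * ((wF s : K) * coeff s F) := by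
  have : (monomial s a : MvPolynomial σ K) = a • basisMonomials σ K s := by
    simp [smul_monomial]
  rw [this, map_smul, ell, Module.Basis.constr_basis, smul_eq_mul]

lemma ell_mul (F f : MvPolynomial σ K) (t : σ →₀ ℕ) :
    ell F (monomial t 1 * f) =
      ∑ s ∈ f.support, f.coeff s * ((wF (t + s) : K) * coeff (t + s) F) := by
  conv_lhs => rw [f.as_sum]
  rw [Finset.mul_sum, map_sum]
  refine Finset.sum_congr rfl fun s _ => ?_
  rw [monomial_mul, ell_monomial, one_mul]

lemma coeff_diffAction (F f : MvPolynomial σ K) (t : σ →₀ ℕ) :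
    (wF t : K) * coeff t (diffAction f F) = ell F (monomial t 1 * f) := by
  rw [ell_mul, diffAction, coeff_sum, Finset.mul_sum]
  refine Finset.sum_congr rfl fun s _ => ?_
  rw [coeff_smul, smul_eq_mul, mul_left_comm, isShift_diffOp s F t]

lemma diffAction_eq_zero [CharZero K] (F f : MvPolynomial σ K) :
    diffAction f F = 0 ↔ ∀ t, ell F (monomial t 1 * f) = 0 := by
  constructor
  · intro h t
    rw [← coeff_diffAction, h]; simp
  · intro h
    ext t
    have := h t
    rw [← coeff_diffAction] at this
    rcases mul_eq_zero.1 this with h | h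
    · exact absurd (by exact_mod_cast h) (wF_ne t)
    · simpa using h

lemma mem_annIdeal [CharZero K] (F f : MvPolynomial σ K) :
    f ∈ annIdeal F ↔ ∀ t, ell F (monomial t 1 * f) = 0 := by
  constructor
  · intro h
    let I : Ideal (MvPolynomial σ K) :=
      { carrier := {f | ∀ g, ell F (g * f) = 0}
        add_mem' := fun {a b} ha hb g => by rw [mul_add, map_add, ha, hb, add_zero]
        zero_mem' := fun g => by simp
        smul_mem' := fun c a ha g => by
          rw [smul_eq_mul, ← mul_assoc]; exact ha _ }
    have hI : annIdeal F ≤ I := by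
      refine Ideal.span_le.2 fun f hf g => ?_
      have hf' := (diffAction_eq_zero F f).1 hf
      rw [g.as_sum, Finset.sum_mul, map_sum]
      refine Finset.sum_eq_zero fun s _ => ?_
      have : (monomial s (coeff s g) : MvPolynomial σ K) = coeff s g • monomial s 1 := by
        simp [smul_monomial]
      rw [this, smul_mul_assoc, map_smul, hf', smul_zero]
    exact fun t => hI h _
  · intro h
    exact Ideal.subset_span ((diffAction_eq_zero F f).2 h)

end Aux

section Perazzo

/-- Exponents in the `y`-variables of degree at most `n`. -/
abbrev NIdx (m n : ℕ) := {b : Fin m → ℕ // ∑ i, b i ≤ n}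

/-- Homogenization. -/
def nEquiv (m n : ℕ) : NIdx m n ≃ {P : Fin (m + 1) → ℕ // ∑ i, P i = n} where
  toFun b := ⟨Fin.cons (n - ∑ i, b.1 i) b.1, by
    rw [Fin.sum_univ_succ]; simp [Nat.sub_add_cancel b.2]⟩
  invFun P := ⟨fun i => P.1 i.succ, by
    have := P.2; rw [Fin.sum_univ_succ] at this
    change ∑ i : Fin m, P.1 i.succ ≤ n; omega⟩
  left_inv b := by ext; simp
  right_inv P := by
    ext i
    have := P.2; rw [Fin.sum_univ_succ] at this
    refine Fin.cases ?_ (fun j => ?_) i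
    · simp; omega
    · simp

noncomputable def nEquivSym (m n : ℕ) : NIdx m n ≃ Sym (Fin (m + 1)) n :=
  (nEquiv m n).trans (Sym.equivNatSumOfFintype (Fin (m + 1)) n).symm

noncomputable instance (m n : ℕ) : Fintype (NIdx m n) := Fintype.ofEquiv _ (nEquivSym m n).symm

lemma card_NIdx (m n : ℕ) : Fintype.card (NIdx m n) = (n + m).choose m := by
  rw [Fintype.card_congr (nEquivSym m n), Sym.card_sym_eq_choose, Fintype.card_fin]
  have : m + 1 + n - 1 = n + m := by omega
  rw [this, Nat.choose_symm_add]

/-- Exponent vectors. -/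
noncomputable def ex {m d : ℕ} (a : MIdx m d → ℕ) (b : Fin m → ℕ) : PIdx m d →₀ ℕ :=
  Finsupp.equivFunOnFinite.symm (Sum.elim a b)

@[simp] lemma ex_inl {m d : ℕ} (a : MIdx m d → ℕ) (b : Fin m → ℕ) (α) :
    ex a b (Sum.inl α) = a α := rfl

@[simp] lemma ex_inr {m d : ℕ} (a : MIdx m d → ℕ) (b : Fin m → ℕ) (j) :
    ex a b (Sum.inr j) = b j := rfl

lemma ex_add {m d : ℕ} (a a' : MIdx m d → ℕ) (b b' : Fin m → ℕ) :
    ex a b + ex a' b' = ex (a + a') (b + b') := by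
  ext (i | i) <;> simp

lemma ex_inj {m d : ℕ} {a a' : MIdx m d → ℕ} {b b' : Fin m → ℕ} :
    ex a b = ex a' b' ↔ a = a' ∧ b = b' := by
  constructor
  · intro h
    exact ⟨funext fun i => DFunLike.congr_fun h (Sum.inl i),
      funext fun i => DFunLike.congr_fun h (Sum.inr i)⟩
  · rintro ⟨rfl, rfl⟩; rfl

lemma ex_surj {m d : ℕ} (s : PIdx m d →₀ ℕ) : ∃ a b, s = ex a b :=
  ⟨fun i => s (Sum.inl i), fun i => s (Sum.inr i), by ext (i | i) <;> rfl⟩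

variable {K : Type*} [Field K] {m d : ℕ}

lemma perazzo_eq : perazzoForm K m d =
    ∑ α : MIdx m d, monomial (ex (Pi.single α 1) α.1) 1 := by
  unfold perazzoForm
  refine Finset.sum_congr rfl fun α _ => ?_
  have : ex (Pi.single α 1) α.1 =
      Finsupp.single (Sum.inl α) 1 + ∑ j, Finsupp.single (Sum.inr j : PIdx m d) (α.1 j) := by
    ext (i | i)
    · simp [Finsupp.single_apply, Pi.single_apply, Finsupp.finsetSum_apply, eq_comm]
    · simp [Finsupp.single_apply, Finsupp.finsetSum_apply]
  rw [this, ← one_mul (1 : K), ← monomial_mul, monomial_sum_one]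
  simp [X, monomial_pow]

lemma coeff_perazzo (α : MIdx m d) :
    coeff (ex (Pi.single α 1) α.1) (perazzoForm K m d) = 1 := by
  rw [perazzo_eq, coeff_sum, Finset.sum_eq_single α]
  · simp
  · intro β _ h
    rw [coeff_monomial, if_neg]
    rw [ex_inj]
    rintro ⟨-, h2⟩
    exact h (Subtype.ext h2)
  · simp

lemma coeff_perazzo_ne {s : PIdx m d →₀ ℕ} (h : coeff s (perazzoForm K m d) ≠ 0) :
    ∃ α : MIdx m d, s = ex (Pi.single α 1) α.1 := by
  by_contra hc
  push Not at hc
  apply h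
  rw [perazzo_eq, coeff_sum]
  refine Finset.sum_eq_zero fun α _ => ?_
  rw [coeff_monomial, if_neg (hc α).symm]

lemma exists_top (hm : 2 ≤ m) (c : Fin m → ℕ) (hc : ∑ i, c i ≤ d - 1) :
    ∃ (α : MIdx m d) (e : Fin m → ℕ), e + c = α.1 := by
  let i0 : Fin m := ⟨0, by omega⟩
  refine ⟨⟨Pi.single i0 (d - 1 - ∑ i, c i) + c, ?_⟩, _, rfl⟩
  simp [Finset.sum_add_distrib, Nat.sub_add_cancel hc]

/-- The coordinate map. -/
noncomputable def TT (K : Type*) [Field K] (m d : ℕ) : MvPolynomial (PIdx m d) K →ₗ[K]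
    (NIdx m (d - 1) → K) × (NIdx m (d - 1) → K) :=
  LinearMap.prod (LinearMap.pi fun c => lcoeff K (ex 0 c.1))
    (LinearMap.pi fun b => (ell (perazzoForm K m d)).comp
      (LinearMap.mulLeft K (monomial (ex 0 b.1) 1)))

lemma TT_fst (f : MvPolynomial (PIdx m d) K) (c) : (TT K m d f).1 c = coeff (ex 0 c.1) f := rfl

lemma TT_snd (f : MvPolynomial (PIdx m d) K) (b) :
    (TT K m d f).2 b = ell (perazzoForm K m d) (monomial (ex 0 b.1) 1 * f) := rfl

lemma ker_TT [CharZero K] (hm : 2 ≤ m) : 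
    LinearMap.ker (TT K m d) = (annIdeal (perazzoForm K m d)).restrictScalars K := by
  ext f
  rw [LinearMap.mem_ker, Submodule.restrictScalars_mem, mem_annIdeal]
  constructor
  · intro h t
    have h1 : ∀ c : NIdx m (d - 1), coeff (ex 0 c.1) f = 0 := fun c => by
      rw [← TT_fst, h]; rfl
    have h2 : ∀ b : NIdx m (d - 1),
        ell (perazzoForm K m d) (monomial (ex 0 b.1) 1 * f) = 0 := fun c => by
      rw [← TT_snd, h]; rfl
    obtain ⟨a, b, rfl⟩ := ex_surj t
    by_cases hab : a = 0 ∧ ∑ i, b i ≤ d - 1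
    · obtain ⟨rfl, hb⟩ := hab
      exact h2 ⟨b, hb⟩
    rw [ell_mul]
    refine Finset.sum_eq_zero fun s _ => ?_
    by_cases hz : coeff (ex a b + s) (perazzoForm K m d) = 0
    · rw [hz]; simp
    obtain ⟨β, hβ⟩ := coeff_perazzo_ne hz
    obtain ⟨a', c, rfl⟩ := ex_surj s
    rw [ex_add, ex_inj] at hβ
    obtain ⟨e1, e2⟩ := hβ
    have hs : ∑ i, b i + ∑ i, c i = d - 1 := by
      rw [← β.2, ← e2, ← Finset.sum_add_distrib]; rfl
    have ha : a ≠ 0 := fun h => hab ⟨h, by omega⟩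
    have ha' : a' = 0 := by
      obtain ⟨γ, hγ⟩ := Function.ne_iff.1 ha
      have hγ' : a γ ≠ 0 := hγ
      have e := congrFun e1 γ
      have hγβ : γ = β := by
        by_contra hne
        rw [Pi.single_eq_of_ne hne, Pi.add_apply] at e
        omega
      subst hγβ
      funext δ
      have e' := congrFun e1 δ
      by_cases hδ : δ = γ
      · subst hδ
        rw [Pi.single_eq_same, Pi.add_apply] at e
        simp only [Pi.zero_apply]; omega
      · rw [Pi.single_eq_of_ne hδ, Pi.add_apply] at e'
        simp only [Pi.zero_apply]; omega
    subst ha'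
    rw [h1 ⟨c, by omega⟩, zero_mul]
  · intro h
    refine Prod.ext (funext fun c => ?_) (funext fun b => ?_)
    · rw [TT_fst]
      change _ = (0 : K)
      obtain ⟨α, e, he⟩ := exists_top hm c.1 c.2
      have := h (ex (Pi.single α 1) e)
      rw [ell_mul, Finset.sum_eq_single (ex 0 c.1)] at this
      · rw [ex_add, add_zero, he, coeff_perazzo, mul_one] at this
        rcases mul_eq_zero.1 this with h | h
        · exact h
        · exact absurd (by exact_mod_cast h) (wF_ne (ex (Pi.single α 1) α.1))
      · intro s _ hs
        by_cases hz : coeff (ex (Pi.single α 1) e + s) (perazzoForm K m d) = 0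
        · rw [hz]; simp
        exfalso
        obtain ⟨β, hβ⟩ := coeff_perazzo_ne hz
        obtain ⟨a', c', rfl⟩ := ex_surj s
        rw [ex_add, ex_inj] at hβ
        obtain ⟨e1, e2⟩ := hβ
        have hαβ : α = β := by
          by_contra hne
          have := congrFun e1 α
          rw [Pi.single_eq_of_ne hne, Pi.add_apply, Pi.single_eq_same] at this
          omega
        subst hαβ
        apply hs
        rw [ex_inj]
        exact ⟨by simpa using e1, add_left_cancel (e2.trans he.symm)⟩
      · intro hn
        rw [notMem_support_iff.1 hn, zero_mul]
    · rw [TT_snd, h]; rfl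

lemma range_TT [CharZero K] (hm : 2 ≤ m) : LinearMap.range (TT K m d) = ⊤ := by
  classical
  have A : ∀ c : NIdx m (d - 1), (Pi.single c (1 : K), (0 : NIdx m (d - 1) → K)) ∈
      LinearMap.range (TT K m d) := by
    intro c
    refine ⟨monomial (ex 0 c.1) 1, Prod.ext (funext fun c' => ?_) (funext fun b => ?_)⟩
    · rw [TT_fst, coeff_monomial]
      simp [Pi.single_apply, ex_inj, Subtype.ext_iff, eq_comm]
    · rw [TT_snd, monomial_mul, ell_monomial, ex_add]
      by_cases hz : coeff (ex (0 + 0) (b.1 + c.1)) (perazzoForm K m d) = 0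
      · rw [hz]; simp
      obtain ⟨β, hβ⟩ := coeff_perazzo_ne hz
      have := congrFun (ex_inj.1 hβ).1 β
      simp at this
  have B : ∀ b : NIdx m (d - 1), ((0 : NIdx m (d - 1) → K), Pi.single b (1 : K)) ∈
      LinearMap.range (TT K m d) := by
    intro b
    obtain ⟨α, e, he⟩ := exists_top hm b.1 b.2
    refine ⟨monomial (ex (Pi.single α 1) e) ((wF (ex (Pi.single α 1) α.1) : K))⁻¹,
      Prod.ext (funext fun c' => ?_) (funext fun b' => ?_)⟩
    · rw [TT_fst, coeff_monomial, if_neg]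
      · rfl
      · intro h
        have := congrFun (ex_inj.1 h).1 α
        simp at this
    · rw [TT_snd, monomial_mul, ell_monomial, ex_add, zero_add]
      by_cases hb : b' = b
      · subst hb
        rw [add_comm, he, coeff_perazzo]
        have : (wF (ex (Pi.single α 1) α.1) : K) ≠ 0 := by exact_mod_cast wF_ne _
        simp [this]
      · simp only [Pi.single_eq_of_ne hb]
        by_cases hz : coeff (ex (Pi.single α 1) (b'.1 + e)) (perazzoForm K m d) = 0
        · rw [hz]; simp
        exfalso
        obtain ⟨β, hβ⟩ := coeff_perazzo_ne hz
        obtain ⟨e1, e2⟩ := ex_inj.1 hβ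
        have hαβ : α = β := by
          by_contra hne
          have := congrFun e1 α
          rw [Pi.single_eq_of_ne hne, Pi.single_eq_same] at this
          omega
        subst hαβ
        apply hb
        apply Subtype.ext
        rw [add_comm] at e2
        exact add_left_cancel (e2.trans he.symm)
  rw [eq_top_iff]
  rintro ⟨p, q⟩ -
  have : (p, q) = ∑ c, p c • (Pi.single c (1 : K), (0 : NIdx m (d - 1) → K)) +
      ∑ b, q b • ((0 : NIdx m (d - 1) → K), Pi.single b (1 : K)) := by
    refine Prod.ext (funext fun c => ?_) (funext fun c => ?_)
    · simp [Prod.fst_sum, Finset.sum_apply, Pi.single_apply]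
    · simp [Prod.snd_sum, Finset.sum_apply, Pi.single_apply]
  rw [this]
  exact Submodule.add_mem _ (Submodule.sum_mem _ fun c _ => Submodule.smul_mem _ _ (A c))
    (Submodule.sum_mem _ fun c _ => Submodule.smul_mem _ _ (B c))

end Perazzo

/-- The `K`-vector-space dimension of the full Perazzo algebra `A_F` is
`2·binom(d+m-1, m)`. -/
theorem finrank_fullPerazzo
    (K : Type*) [Field K] [CharZero K] (m d : ℕ) (hm : 2 ≤ m) (hd : 3 ≤ d) :
    Module.finrank K (MvPolynomial (PIdx m d) K ⧸ annIdeal (perazzoForm K m d))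
      = 2 * Nat.choose (d + m - 1) m := by
  have e1 : (MvPolynomial (PIdx m d) K ⧸ annIdeal (perazzoForm K m d)) ≃ₗ[K]
      (MvPolynomial (PIdx m d) K ⧸ (annIdeal (perazzoForm K m d)).restrictScalars K) :=
    (Submodule.Quotient.restrictScalarsEquiv K (annIdeal (perazzoForm K m d))).symm
  rw [e1.finrank_eq, ← ker_TT hm, (TT K m d).quotKerEquivRange.finrank_eq, range_TT hm,
    finrank_top, Module.finrank_prod, Module.finrank_pi, card_NIdx, ← two_mul]
  congr 2
  omega
end

section
/- Let F = X_{2,0}Y_1² + X_{1,1}Y_1Y_2 + X_{0,2}Y_2² and A_F = R/Ann_R(F), where R = K[x_{2,0}, x_{1,1}, x_{0,2}, y_1, y_2]. Let ℓ = a_{2,0}x_{2,0} + a_{1,1}x_{1,1} + a_{0,2}x_{0,2} + b_1y_1 + b_2y_2 ∈ [A_F]_1 and suppose either (i) b_1 ≠ 0, b_2 = 0 and a_{2,0} = 0; or (ii) b_2 ≠ 0, b_1 = 0 and a_{0,2} = 0; or (iii) a_{2,0} = a_{1,1} = a_{0,2} = 0 and (b_1, b_2) ≠ (0,0). Then the Jordan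 type of ℓ in A_F is P_{ℓ,A_F} = (3², 2², 1²). -/
open MvPolynomial

/-- The Perazzo threefold form `F = X_{2,0} Y_1² + X_{1,1} Y_1 Y_2 + X_{0,2} Y_2²`,
with variables indexed by `Fin 5` as `x_{2,0}, x_{1,1}, x_{0,2}, y_1, y_2`. -/
noncomputable def toyPerazzoForm (K : Type*) [CommSemiring K] : MvPolynomial (Fin 5) K :=
  X 0 * X 3 ^ 2 + X 1 * X 3 * X 4 + X 2 * X 4 ^ 2

/-- The linear form `ℓ = a_{2,0} x_{2,0} + a_{1,1} x_{1,1} + a_{0,2} x_{0,2} + b_1 y_1 + b_2 y_2`. -/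
noncomputable def toyLinForm {K : Type*} [CommSemiring K]
    (a20 a11 a02 b1 b2 : K) : MvPolynomial (Fin 5) K :=
  C a20 * X 0 + C a11 * X 1 + C a02 * X 2 + C b1 * X 3 + C b2 * X 4

section Helpers

theorem tp_pderiv_comm {K : Type*} [Field K] {σ : Type*} [DecidableEq σ] (i j : σ)
    (p : MvPolynomial σ K) : pderiv i (pderiv j p) = pderiv j (pderiv i p) := by
  have h : ⁅(pderiv i : Derivation K (MvPolynomial σ K) (MvPolynomial σ K)),
      (pderiv j : Derivation K (MvPolynomial σ K) (MvPolynomial σ K))⁆ = 0 := by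
    refine MvPolynomial.derivation_ext (fun k => ?_)
    simp only [Derivation.commutator_apply, pderiv_X, Derivation.coe_zero, Pi.zero_apply]
    by_cases h1 : i = k <;> by_cases h2 : j = k <;> simp [Pi.single_apply, h1, h2, eq_comm]
    all_goals (try split_ifs) <;> simp
  have := congrArg (fun D : Derivation K (MvPolynomial σ K) (MvPolynomial σ K) => D p) h
  simpa [Derivation.commutator_apply, sub_eq_zero] using this

theorem tp_comm {K : Type*} [Field K] {σ : Type*} [DecidableEq σ] :
    ∀ a ∈ Set.range (fun i : σ => ((pderiv i).toLinearMap : Module.End K (MvPolynomial σ K))),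
    ∀ b ∈ Set.range (fun i : σ => ((pderiv i).toLinearMap : Module.End K (MvPolynomial σ K))),
      a * b = b * a := by
  rintro _ ⟨i, rfl⟩ _ ⟨j, rfl⟩
  apply LinearMap.ext
  intro p
  exact tp_pderiv_comm i j p

open scoped IsMulCommutative in
theorem tp_exists {K : Type*} [Field K] {σ : Type*} [DecidableEq σ] :
    ∃ T : MvPolynomial σ K →ₐ[K] Module.End K (MvPolynomial σ K),
      (∀ i, T (X i) = (pderiv i).toLinearMap) ∧ ∀ f F, diffAction f F = T f F := by
  let S : Set (Module.End K (MvPolynomial σ K)) := Set.range (fun i : σ => ((pderiv i).toLinearMap : Module.End K (MvPolynomial σ K)))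
  have hc : IsMulCommutative (Algebra.adjoin K S) := Algebra.isMulCommutative_adjoin K tp_comm
  let d : σ → Algebra.adjoin K S := fun i => ⟨(pderiv i).toLinearMap, Algebra.subset_adjoin ⟨i, rfl⟩⟩
  refine ⟨(Algebra.adjoin K S).val.comp (aeval d), fun i => by simp [d], fun f F => ?_⟩
  rw [AlgHom.comp_apply, aeval_def, eval₂_eq, map_sum, LinearMap.sum_apply]
  unfold diffAction
  refine Finset.sum_congr rfl fun s _ => ?_
  rw [← Algebra.smul_def, map_smul, LinearMap.smul_apply]
  congr 2
  unfold diffOp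
  rw [← Finset.prod_map_toList, map_list_prod, List.map_map]
  rfl

noncomputable def tpPsiFun {K : Type*} [Field K] (z : Fin 12 → K) : MvPolynomial (Fin 5) K :=
  C (z 0) * (X 0 * X 3 ^ 2 + X 1 * X 3 * X 4 + X 2 * X 4 ^ 2) + C (z 1) * X 3 ^ 2
    + C (z 2) * (X 3 * X 4) + C (z 3) * X 4 ^ 2 + C (z 4) * (2 * (X 0 * X 3) + X 1 * X 4)
    + C (z 5) * (X 1 * X 3 + 2 * (X 2 * X 4)) + C (z 6) * X 0 + C (z 7) * X 1 + C (z 8) * X 2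
    + C (z 9) * X 3 + C (z 10) * X 4 + C (z 11)

noncomputable def tpPsi (K : Type*) [Field K] : (Fin 12 → K) →ₗ[K] MvPolynomial (Fin 5) K where
  toFun := tpPsiFun
  map_add' x y := by simp only [tpPsiFun, Pi.add_apply, map_add]; ring
  map_smul' x y := by
    simp only [tpPsiFun, Pi.smul_apply, smul_eq_mul, map_mul, RingHom.id_apply, smul_eq_C_mul]; ring

def tpMFun {K : Type*} [Field K] (a0 a1 a2 b1 b2 : K) (z : Fin 12 → K) : Fin 12 → K :=
  ![0, a0 * z 0, a1 * z 0, a2 * z 0, b1 * z 0, b2 * z 0,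
    2 * b1 * z 4, b1 * z 5 + b2 * z 4, 2 * b2 * z 5,
    2 * b1 * z 1 + b2 * z 2 + 2 * a0 * z 4 + a1 * z 5,
    b1 * z 2 + 2 * b2 * z 3 + a1 * z 4 + 2 * a2 * z 5,
    a0 * z 6 + a1 * z 7 + a2 * z 8 + b1 * z 9 + b2 * z 10]

def tpM {K : Type*} [Field K] (a0 a1 a2 b1 b2 : K) : (Fin 12 → K) →ₗ[K] (Fin 12 → K) where
  toFun := tpMFun a0 a1 a2 b1 b2
  map_add' x y := by
    ext i; fin_cases i <;> simp [tpMFun] <;> ring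
  map_smul' x y := by
    ext i; fin_cases i <;> simp [tpMFun] <;> ring

theorem tp_two {K : Type*} [Field K] (i : Fin 5) : pderiv i (2 : MvPolynomial (Fin 5) K) = 0 := by
  have := (pderiv (R := K) i).map_natCast 2
  simpa using this

theorem tp_pd {K : Type*} [Field K] (a0 a1 a2 b1 b2 : K) (z : Fin 12 → K) :
    C a0 * pderiv 0 (tpPsi K z) + C a1 * pderiv 1 (tpPsi K z) + C a2 * pderiv 2 (tpPsi K z)
     + C b1 * pderiv 3 (tpPsi K z) + C b2 * pderiv 4 (tpPsi K z)
     = tpPsi K (tpM a0 a1 a2 b1 b2 z) := by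
  have h2 : (C (2 : K) : MvPolynomial (Fin 5) K) = 2 := map_ofNat C 2
  simp [tpPsi, tpPsiFun, tpM, tpMFun, pderiv_X, Derivation.leibniz, Derivation.leibniz_pow, tp_two,
    Pi.single_apply, h2]
  ring

theorem tp_pd_i {K : Type*} [Field K] (i : Fin 5) (z : Fin 12 → K) :
    ∃ z', pderiv i (tpPsi K z) = tpPsi K z' := by
  fin_cases i
  · exact ⟨_, by simpa using tp_pd 1 0 0 0 0 z⟩
  · exact ⟨_, by simpa using tp_pd 0 1 0 0 0 z⟩
  · exact ⟨_, by simpa using tp_pd 0 0 1 0 0 z⟩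
  · exact ⟨_, by simpa using tp_pd 0 0 0 1 0 z⟩
  · exact ⟨_, by simpa using tp_pd 0 0 0 0 1 z⟩

theorem tp_ker_step {K : Type*} [Field K] (z : Fin 12 → K) (h : tpPsi K z = 0)
    (a0 a1 a2 b1 b2 : K) : tpPsi K (tpM a0 a1 a2 b1 b2 z) = 0 := by
  rw [← tp_pd, h]; simp

theorem tp_ker_last {K : Type*} [Field K] (z : Fin 12 → K) (h : tpPsi K z = 0) : z 11 = 0 := by
  have := congrArg (eval (fun _ => (0 : K))) h
  simpa [tpPsi, tpPsiFun] using this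

theorem tp_inj {K : Type*} [Field K] [CharZero K] : Function.Injective (tpPsi K) := by
  rw [← LinearMap.ker_eq_bot, LinearMap.ker_eq_bot']
  intro z h
  have l1 := fun a0 a1 a2 b1 b2 => tp_ker_last _ (tp_ker_step z h a0 a1 a2 b1 b2)
  have l2 := fun a0 a1 a2 b1 b2 c0 c1 c2 d1 d2 =>
    tp_ker_last _ (tp_ker_step _ (tp_ker_step z h a0 a1 a2 b1 b2) c0 c1 c2 d1 d2)
  have l3 := tp_ker_last _ (tp_ker_step _ (tp_ker_step _ (tp_ker_step z h 1 0 0 0 0) 0 0 0 1 0) 0 0 0 1 0)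
  have h11 := tp_ker_last z h
  have h6 := l1 1 0 0 0 0
  have h7 := l1 0 1 0 0 0
  have h8 := l1 0 0 1 0 0
  have h9 := l1 0 0 0 1 0
  have h10 := l1 0 0 0 0 1
  have h1 := l2 0 0 0 1 0 0 0 0 1 0
  have h2 := l2 0 0 0 1 0 0 0 0 0 1
  have h3 := l2 0 0 0 0 1 0 0 0 0 1
  have h4 := l2 1 0 0 0 0 0 0 0 1 0
  have h5 := l2 0 0 1 0 0 0 0 0 0 1
  simp [tpM, tpMFun] at h1 h2 h3 h4 h5 h6 h7 h8 h9 h10 l3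
  ext i
  fin_cases i <;> simpa

theorem tp_surj {K : Type*} [Field K] [CharZero K]
    (T : MvPolynomial (Fin 5) K →ₐ[K] Module.End K (MvPolynomial (Fin 5) K))
    (hT : ∀ i, T (X i) = (pderiv i).toLinearMap) (z : Fin 12 → K) :
    ∃ f, T f (toyPerazzoForm K) = tpPsi K z := by
  have hX : ∀ i p, T (X i) p = pderiv i p := fun i p => by rw [hT]; rfl
  refine ⟨z 0 • 1 + z 1 • X 0 + z 2 • X 1 + z 3 • X 2 + z 4 • X 3 + z 5 • X 4
    + (z 6 / 2) • (X 3 * X 3) + z 7 • (X 3 * X 4) + (z 8 / 2) • (X 4 * X 4)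
    + (z 9 / 2) • (X 0 * X 3) + (z 10 / 2) • (X 2 * X 4) + (z 11 / 2) • (X 0 * (X 3 * X 3)), ?_⟩
  have h2 : ∀ c : K, (C c : MvPolynomial (Fin 5) K) = C (c / 2) * 2 := fun c => by
    rw [← map_ofNat C 2, ← C_mul]; simp
  simp only [map_add, map_smul, map_mul, map_one, LinearMap.add_apply, LinearMap.smul_apply,
    Module.End.mul_apply, hX, Module.End.one_apply]
  simp [tpPsi, tpPsiFun, toyPerazzoForm, pderiv_X, Derivation.leibniz, Derivation.leibniz_pow, tp_two,
    Pi.single_apply, smul_eq_C_mul, -map_div₀]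
  rw [h2 (z 6), h2 (z 8), h2 (z 9), h2 (z 10), h2 (z 11)]
  ring

theorem tp_range {K : Type*} [Field K] [CharZero K]
    (T : MvPolynomial (Fin 5) K →ₐ[K] Module.End K (MvPolynomial (Fin 5) K))
    (hT : ∀ i, T (X i) = (pderiv i).toLinearMap) (f : MvPolynomial (Fin 5) K) :
    ∃ z, T f (toyPerazzoForm K) = tpPsi K z := by
  induction f using MvPolynomial.induction_on with
  | C a =>
    refine ⟨Pi.single 0 a, ?_⟩
    have : (C a : MvPolynomial (Fin 5) K) = a • 1 := by rw [smul_eq_C_mul, mul_one]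
    rw [this, map_smul, map_one]
    simp [tpPsi, tpPsiFun, toyPerazzoForm, smul_eq_C_mul]
    ring
  | add p q hp hq =>
    obtain ⟨x, hx⟩ := hp
    obtain ⟨y, hy⟩ := hq
    exact ⟨x + y, by simp [hx, hy]⟩
  | mul_X p i hp =>
    obtain ⟨x, hx⟩ := hp
    obtain ⟨y, hy⟩ := tp_pd_i i x
    refine ⟨y, ?_⟩
    rw [mul_comm, map_mul, Module.End.mul_apply, hx, hT, ← hy]
    rfl

theorem tp_model {K : Type*} [Field K] [CharZero K] (a0 a1 a2 b1 b2 : K) :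
    ∃ e : (MvPolynomial (Fin 5) K ⧸ annIdeal (toyPerazzoForm K)) ≃ₗ[K] (Fin 12 → K),
      ∀ x, e (Ideal.Quotient.mk (annIdeal (toyPerazzoForm K)) (toyLinForm a0 a1 a2 b1 b2) * x)
        = tpM a0 a1 a2 b1 b2 (e x) := by
  obtain ⟨T, hT, hd⟩ := tp_exists (K := K) (σ := Fin 5)
  choose φ hφ using tp_range T hT
  let φl : MvPolynomial (Fin 5) K →ₗ[K] (Fin 12 → K) :=
    { toFun := φ
      map_add' := fun x y => tp_inj (by rw [← hφ, map_add, map_add, LinearMap.add_apply, hφ, hφ])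
      map_smul' := fun c y => tp_inj (by
        rw [← hφ, map_smul, map_smul, LinearMap.smul_apply, hφ]; rfl) }
  have hl : ∀ f, tpPsi K (φl f) = T f (toyPerazzoForm K) := fun f => (hφ f).symm
  have hsurj : Function.Surjective φl := fun z => by
    obtain ⟨f, hf⟩ := tp_surj T hT z
    exact ⟨f, tp_inj (by rw [hl, hf])⟩
  have hann : ∀ f, f ∈ annIdeal (toyPerazzoForm K) ↔ T f (toyPerazzoForm K) = 0 := by
    intro f
    constructor
    · intro h
      refine Submodule.span_induction (fun x hx => ?_) ?_ (fun x y _ _ hx hy => ?_)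
        (fun a x _ hx => ?_) h
      · rw [← hd]; exact hx
      · simp
      · simp [hx, hy]
      · simp [hx]
    · intro h
      exact Ideal.subset_span (by rw [Set.mem_ofPred_eq, hd]; exact h)
  let π := (Ideal.Quotient.mkₐ K (annIdeal (toyPerazzoForm K))).toLinearMap
  have hπ : Function.Surjective π := Ideal.Quotient.mk_surjective
  have hker : LinearMap.ker π = LinearMap.ker φl := by
    ext f
    rw [LinearMap.mem_ker, LinearMap.mem_ker]
    have h1 : π f = 0 ↔ f ∈ annIdeal (toyPerazzoForm K) := Ideal.Quotient.eq_zero_iff_mem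
    rw [h1, hann, ← hl]
    exact map_eq_zero_iff _ tp_inj
  let e := (π.quotKerEquivOfSurjective hπ).symm.trans
    ((Submodule.quotEquivOfEq _ _ hker).trans (φl.quotKerEquivOfSurjective hsurj))
  have he : ∀ f, e (π f) = φl f := by
    intro f
    have : (π.quotKerEquivOfSurjective hπ).symm (π f) = Submodule.Quotient.mk f := by
      rw [LinearEquiv.symm_apply_eq]; rfl
    simp only [e, LinearEquiv.trans_apply, this]
    rfl
  refine ⟨e, fun x => ?_⟩
  obtain ⟨f, rfl⟩ := hπ x
  have hm : Ideal.Quotient.mk (annIdeal (toyPerazzoForm K)) (toyLinForm a0 a1 a2 b1 b2) * π f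
    = π (toyLinForm a0 a1 a2 b1 b2 * f) := (map_mul (Ideal.Quotient.mk _) _ _).symm
  rw [hm, he, he]
  apply tp_inj
  rw [hl, ← tp_pd, hl]
  have hX : ∀ i p, T (X i) p = pderiv i p := fun i p => by rw [hT]; rfl
  simp only [toyLinForm, ← smul_eq_C_mul, map_mul, map_add, map_smul, Module.End.mul_apply,
    LinearMap.add_apply, LinearMap.smul_apply, hX]

theorem tp_rk {K A V : Type*} [Field K] [CommRing A] [Algebra K A] [AddCommGroup V] [Module K V]
    (e : A ≃ₗ[K] V) (l : A) (M : V →ₗ[K] V) (h : ∀ x, e (l * x) = M (e x)) (k : ℕ) :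
    rkPow (K := K) l k = Module.finrank K (LinearMap.range (M ^ k)) := by
  have hk : ∀ x, e ((LinearMap.mulLeft K l ^ k) x) = (M ^ k) (e x) := by
    induction k with
    | zero => intro x; rfl
    | succ k ih =>
      intro x
      rw [pow_succ, pow_succ, Module.End.mul_apply, Module.End.mul_apply, ih, ← h]; rfl
  have : M ^ k = e.toLinearMap ∘ₗ (LinearMap.mulLeft K l ^ k) ∘ₗ e.symm.toLinearMap := by
    ext x; rw [LinearMap.comp_apply, LinearMap.comp_apply, LinearEquiv.coe_coe, LinearEquiv.coe_coe, hk,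
      LinearEquiv.apply_symm_apply]
  unfold rkPow
  rw [this, LinearMap.range_comp, LinearEquiv.range_comp]
  exact (LinearEquiv.finrank_map_eq e _).symm

theorem tp_factor {K V W : Type*} [Field K] [AddCommGroup V] [Module K V] {n : ℕ}
    [AddCommGroup W] [Module K W]
    (M : V →ₗ[K] W) (N : V →ₗ[K] (Fin n → K)) (J : (Fin n → K) →ₗ[K] W)
    (hM : ∀ x, M x = J (N x)) (hN : Function.Surjective N) (hJ : ∀ y, J y = 0 → y = 0) :
    Module.finrank K (LinearMap.range M) = n := by
  have : M = J ∘ₗ N := LinearMap.ext hM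
  rw [this, LinearMap.range_comp, LinearMap.range_eq_top.2 hN, Submodule.map_top,
    LinearMap.finrank_range_of_inj, Module.finrank_fin_fun]
  rw [← LinearMap.ker_eq_bot, LinearMap.ker_eq_bot']
  exact hJ

def tpN1 {K : Type*} [Field K] (a0 a1 a2 b1 b2 : K) : (Fin 12 → K) →ₗ[K] (Fin 6 → K) where
  toFun z := ![z 0, z 4, z 5, 2 * b1 * z 1 + b2 * z 2 + 2 * a0 * z 4 + a1 * z 5,
        b1 * z 2 + 2 * b2 * z 3 + a1 * z 4 + 2 * a2 * z 5,
        a0 * z 6 + a1 * z 7 + a2 * z 8 + b1 * z 9 + b2 * z 10]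
  map_add' x y := by ext i; fin_cases i <;> simp <;> ring
  map_smul' x y := by ext i; fin_cases i <;> simp <;> ring

def tpJ1 {K : Type*} [Field K] (a0 a1 a2 b1 b2 : K) : (Fin 6 → K) →ₗ[K] (Fin 12 → K) where
  toFun y := ![0, a0 * y 0, a1 * y 0, a2 * y 0, b1 * y 0, b2 * y 0,
        2 * b1 * y 1, b1 * y 2 + b2 * y 1, 2 * b2 * y 2, y 3, y 4, y 5]
  map_add' x y := by ext i; fin_cases i <;> simp <;> ring
  map_smul' x y := by ext i; fin_cases i <;> simp <;> ring

theorem tp_N1_surj {K : Type*} [Field K] [CharZero K] (a0 a1 a2 b1 b2 : K)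
    (hb : b1 ≠ 0 ∨ b2 ≠ 0) : Function.Surjective (tpN1 a0 a1 a2 b1 b2) := by
  intro y
  rcases hb with hb | hb
  · obtain ⟨v2, h2⟩ : ∃ v, b1 * v = y 4 - a1 * y 1 - 2 * a2 * y 2 := ⟨_, mul_div_cancel₀ _ hb⟩
    obtain ⟨v1, h1⟩ : ∃ v, (2 * b1) * v = y 3 - b2 * v2 - 2 * a0 * y 1 - a1 * y 2 :=
      ⟨_, mul_div_cancel₀ _ (mul_ne_zero two_ne_zero hb)⟩
    obtain ⟨v3, h3⟩ : ∃ v, b1 * v = y 5 := ⟨_, mul_div_cancel₀ _ hb⟩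
    refine ⟨![y 0, v1, v2, 0, y 1, y 2, 0, 0, 0, v3, 0, 0], ?_⟩
    ext i
    fin_cases i
    · rfl
    · rfl
    · rfl
    · show 2 * b1 * v1 + b2 * v2 + 2 * a0 * y 1 + a1 * y 2 = y 3
      linear_combination h1
    · show b1 * v2 + 2 * b2 * 0 + a1 * y 1 + 2 * a2 * y 2 = y 4
      linear_combination h2
    · show a0 * 0 + a1 * 0 + a2 * 0 + b1 * v3 + b2 * 0 = y 5
      linear_combination h3
  · obtain ⟨v2, h2⟩ : ∃ v, b2 * v = y 3 - 2 * a0 * y 1 - a1 * y 2 := ⟨_, mul_div_cancel₀ _ hb⟩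
    obtain ⟨v1, h1⟩ : ∃ v, (2 * b2) * v = y 4 - b1 * v2 - a1 * y 1 - 2 * a2 * y 2 :=
      ⟨_, mul_div_cancel₀ _ (mul_ne_zero two_ne_zero hb)⟩
    obtain ⟨v3, h3⟩ : ∃ v, b2 * v = y 5 := ⟨_, mul_div_cancel₀ _ hb⟩
    refine ⟨![y 0, 0, v2, v1, y 1, y 2, 0, 0, 0, 0, v3, 0], ?_⟩
    ext i
    fin_cases i
    · rfl
    · rfl
    · rfl
    · show 2 * b1 * 0 + b2 * v2 + 2 * a0 * y 1 + a1 * y 2 = y 3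
      linear_combination h2
    · show b1 * v2 + 2 * b2 * v1 + a1 * y 1 + 2 * a2 * y 2 = y 4
      linear_combination h1
    · show a0 * 0 + a1 * 0 + a2 * 0 + b1 * 0 + b2 * v3 = y 5
      linear_combination h3

theorem tp_J1_inj {K : Type*} [Field K] [CharZero K] (a0 a1 a2 b1 b2 : K)
    (hb : b1 ≠ 0 ∨ b2 ≠ 0) (y : Fin 6 → K) (hy : tpJ1 a0 a1 a2 b1 b2 y = 0) : y = 0 := by
  have h4 : b1 * y 0 = 0 := congrFun hy 4
  have h5 : b2 * y 0 = 0 := congrFun hy 5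
  have h6 : 2 * b1 * y 1 = 0 := congrFun hy 6
  have h7 : b1 * y 2 + b2 * y 1 = 0 := congrFun hy 7
  have h8 : 2 * b2 * y 2 = 0 := congrFun hy 8
  have h9 : y 3 = 0 := congrFun hy 9
  have h10 : y 4 = 0 := congrFun hy 10
  have h11 : y 5 = 0 := congrFun hy 11
  rcases hb with hb | hb
  · simp [hb] at h4 h6
    simp [h6, hb] at h7
    ext i; fin_cases i <;> assumption
  · simp [hb] at h5 h8
    simp [h8, hb] at h7
    ext i; fin_cases i <;> assumption

theorem tp_rank1 {K : Type*} [Field K] [CharZero K] (a0 a1 a2 b1 b2 : K) (hb : b1 ≠ 0 ∨ b2 ≠ 0) :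
    Module.finrank K (LinearMap.range (tpM a0 a1 a2 b1 b2)) = 6 :=
  tp_factor _ (tpN1 a0 a1 a2 b1 b2) (tpJ1 a0 a1 a2 b1 b2) (fun _ => rfl)
    (tp_N1_surj a0 a1 a2 b1 b2 hb) (tp_J1_inj a0 a1 a2 b1 b2 hb)

def tpN2 {K : Type*} [Field K] (a0 a1 a2 b1 b2 : K) : (Fin 12 → K) →ₗ[K] (Fin 2 → K) where
  toFun z := ![z 0, 2 * b1 ^ 2 * z 1 + 2 * b1 * b2 * z 2 + 2 * b2 ^ 2 * z 3
          + (4 * a0 * b1 + 2 * a1 * b2) * z 4 + (2 * a1 * b1 + 4 * a2 * b2) * z 5]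
  map_add' x y := by
    ext i
    fin_cases i
    · rfl
    · simp
      ring
  map_smul' x y := by
    ext i
    fin_cases i
    · rfl
    · simp
      ring

def tpJ2 {K : Type*} [Field K] (a0 a1 a2 b1 b2 : K) : (Fin 2 → K) →ₗ[K] (Fin 12 → K) where
  toFun y := ![0, 0, 0, 0, 0, 0, 2 * b1 ^ 2 * y 0, 2 * b1 * b2 * y 0, 2 * b2 ^ 2 * y 0,
          (4 * a0 * b1 + 2 * a1 * b2) * y 0, (2 * a1 * b1 + 4 * a2 * b2) * y 0, y 1]
  map_add' x y := by ext i; fin_cases i <;> simp <;> ring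
  map_smul' x y := by ext i; fin_cases i <;> simp <;> ring

theorem tp_N2_surj {K : Type*} [Field K] [CharZero K] (a0 a1 a2 b1 b2 : K)
    (hb : b1 ≠ 0 ∨ b2 ≠ 0) : Function.Surjective (tpN2 a0 a1 a2 b1 b2) := by
  intro y
  rcases hb with hb | hb
  · obtain ⟨v, h⟩ : ∃ v, (2 * b1 ^ 2) * v = y 1 :=
      ⟨_, mul_div_cancel₀ _ (mul_ne_zero two_ne_zero (pow_ne_zero 2 hb))⟩
    refine ⟨![y 0, v, 0, 0, 0, 0, 0, 0, 0, 0, 0, 0], ?_⟩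
    ext i
    fin_cases i
    · rfl
    · show 2 * b1 ^ 2 * v + 2 * b1 * b2 * 0 + 2 * b2 ^ 2 * 0
          + (4 * a0 * b1 + 2 * a1 * b2) * 0 + (2 * a1 * b1 + 4 * a2 * b2) * 0 = y 1
      linear_combination h
  · obtain ⟨v, h⟩ : ∃ v, (2 * b2 ^ 2) * v = y 1 :=
      ⟨_, mul_div_cancel₀ _ (mul_ne_zero two_ne_zero (pow_ne_zero 2 hb))⟩
    refine ⟨![y 0, 0, 0, v, 0, 0, 0, 0, 0, 0, 0, 0], ?_⟩
    ext i
    fin_cases i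
    · rfl
    · show 2 * b1 ^ 2 * 0 + 2 * b1 * b2 * 0 + 2 * b2 ^ 2 * v
          + (4 * a0 * b1 + 2 * a1 * b2) * 0 + (2 * a1 * b1 + 4 * a2 * b2) * 0 = y 1
      linear_combination h

theorem tp_J2_inj {K : Type*} [Field K] [CharZero K] (a0 a1 a2 b1 b2 : K)
    (hb : b1 ≠ 0 ∨ b2 ≠ 0) (y : Fin 2 → K) (hy : tpJ2 a0 a1 a2 b1 b2 y = 0) : y = 0 := by
  have h6 : 2 * b1 ^ 2 * y 0 = 0 := congrFun hy 6
  have h8 : 2 * b2 ^ 2 * y 0 = 0 := congrFun hy 8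
  have h11 : y 1 = 0 := congrFun hy 11
  rcases hb with hb | hb
  · simp [hb] at h6
    ext i; fin_cases i <;> assumption
  · simp [hb] at h8
    ext i; fin_cases i <;> assumption

theorem tp_fac2 {K : Type*} [Field K] (a0 a1 a2 b1 b2 : K) (x : Fin 12 → K) :
    (tpM a0 a1 a2 b1 b2 ^ 2) x = tpJ2 a0 a1 a2 b1 b2 (tpN2 a0 a1 a2 b1 b2 x) := by
  rw [pow_two, Module.End.mul_apply]
  ext i; fin_cases i <;> simp [tpN2, tpJ2, tpM, tpMFun] <;> ring

theorem tp_rank2 {K : Type*} [Field K] [CharZero K] (a0 a1 a2 b1 b2 : K) (hb : b1 ≠ 0 ∨ b2 ≠ 0) :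
    Module.finrank K (LinearMap.range (tpM a0 a1 a2 b1 b2 ^ 2)) = 2 :=
  tp_factor _ (tpN2 a0 a1 a2 b1 b2) (tpJ2 a0 a1 a2 b1 b2) (tp_fac2 a0 a1 a2 b1 b2)
    (tp_N2_surj a0 a1 a2 b1 b2 hb) (tp_J2_inj a0 a1 a2 b1 b2 hb)

theorem tp_cube {K : Type*} [Field K] [CharZero K] (a0 a1 a2 b1 b2 : K)
    (h : a0 * b1 ^ 2 + a1 * b1 * b2 + a2 * b2 ^ 2 = 0) : tpM a0 a1 a2 b1 b2 ^ 3 = 0 := by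
  apply LinearMap.ext
  intro x
  rw [pow_succ, pow_two, Module.End.mul_apply, Module.End.mul_apply]
  ext i; fin_cases i <;> simp [tpM, tpMFun]
  linear_combination 6 * x 0 * h

end Helpers

/-- Example 3.1(a): for `F = X_{2,0}Y_1² + X_{1,1}Y_1Y_2 + X_{0,2}Y_2²`, if
(i) `b_1 ≠ 0`, `b_2 = 0`, `a_{2,0} = 0`; or (ii) `b_2 ≠ 0`, `b_1 = 0`, `a_{0,2} = 0`; or
(iii) `a_{2,0} = a_{1,1} = a_{0,2} = 0` and `(b_1, b_2) ≠ (0,0)`, then the Jordan type of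
`ℓ` in `A_F` is `(3², 2², 1²)`. -/
theorem jordanType_toyPerazzo_middle
    (K : Type*) [Field K] [CharZero K] (a20 a11 a02 b1 b2 : K)
    (hyp : (b1 ≠ 0 ∧ b2 = 0 ∧ a20 = 0) ∨ (b2 ≠ 0 ∧ b1 = 0 ∧ a02 = 0) ∨
      (a20 = 0 ∧ a11 = 0 ∧ a02 = 0 ∧ (b1 ≠ 0 ∨ b2 ≠ 0))) :
    IsJordanTypeMult (K := K)
      (Ideal.Quotient.mk (annIdeal (toyPerazzoForm K)) (toyLinForm a20 a11 a02 b1 b2))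
      (fun k => if k = 3 then 2 else if k = 2 then 2 else if k = 1 then 2 else 0) := by
  have hb : b1 ≠ 0 ∨ b2 ≠ 0 := by tauto
  have hF : a20 * b1 ^ 2 + a11 * b1 * b2 + a02 * b2 ^ 2 = 0 := by
    rcases hyp with ⟨_, rfl, rfl⟩ | ⟨_, rfl, rfl⟩ | ⟨rfl, rfl, rfl, _⟩ <;> ring
  obtain ⟨e, he⟩ := tp_model a20 a11 a02 b1 b2
  have hr := tp_rk e _ _ he
  have h0 : Module.finrank K (LinearMap.range (tpM a20 a11 a02 b1 b2 ^ 0)) = 12 := by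
    rw [pow_zero, Module.End.one_eq_id, LinearMap.range_id, finrank_top, Module.finrank_fin_fun]
  have h1 : Module.finrank K (LinearMap.range (tpM a20 a11 a02 b1 b2 ^ 1)) = 6 := by
    rw [pow_one]; exact tp_rank1 _ _ _ _ _ hb
  have h2 := tp_rank2 a20 a11 a02 b1 b2 hb
  have h3 : ∀ k, 3 ≤ k → Module.finrank K (LinearMap.range (tpM a20 a11 a02 b1 b2 ^ k)) = 0 := by
    intro k hk
    rw [pow_eq_zero_of_le hk (tp_cube _ _ _ _ _ hF), LinearMap.range_zero, finrank_bot]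
  intro k hk
  simp only [hr]
  match k, hk with
  | 1, _ => simp [h0, h1, h2]
  | 2, _ => simp [h1, h2, h3]
  | 3, _ => simp [h2, h3]
  | k + 4, _ =>
    rw [h3 _ (by omega), h3 _ (by omega), h3 _ (by omega)]
    simp
end
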